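/- arXiv:2603.25358 — 9 statements merged into one kernel-verified Lean document; each statement's English description precedes it below -/
import Mathlib

section
/- Let S = (∑_x √( c₊·c₋·p⁺_x·p⁻_x / (c₊·p⁺_x + c₋·p⁻_x) ))², where terms with c₊·p⁺_x + c₋·p⁻_x = 0 are taken to be 0. For ε > 0 and δ₁ ∈ (0,1), if the number of samples N satisfies N ≥ 8·γ·((1+ε)/ε)²·(√S + √(c₋/δ₁))², then with probability at least 1 − δ₁ the estimated acceptance ratios satisfy Δ := γ·∑_x |μ_x − R_x|·q_x ≤ ε/(1+ε). (Theorem 2 / Theorem S2, estimation stage, first bound.) -/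
open MeasureTheory Finset




namespace AccRatio

set_option linter.unusedSectionVars false
set_option linter.unusedVariables false

variable {α : Type*} [Fintype α] [DecidableEq α]

/-- counts -/
def cnt {n : ℕ} (ω : Fin n → α) (s : α) : ℕ := (Finset.univ.filter fun i => ω i = s).card

/-- expectation of a function of the counts -/
noncomputable def E (w : α → ℝ) (n : ℕ) (F : (α → ℕ) → ℝ) : ℝ :=
  ∑ ω : Fin n → α, (∏ i, w (ω i)) * F (cnt ω)

lemma cnt_cons {n : ℕ} (s : α) (ω : Fin n → α) :
    cnt (Fin.cons s ω : Fin (n+1) → α) = cnt ω + Pi.single s 1 := by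
  funext t
  simp only [cnt, Pi.add_apply, Finset.card_filter, Fin.sum_univ_succ, Fin.cons_zero, Fin.cons_succ,
    Pi.single_apply]
  rw [add_comm]
  simp [eq_comm]

lemma E_succ (w : α → ℝ) (n : ℕ) (F : (α → ℕ) → ℝ) :
    E w (n+1) F = E w n (fun c => ∑ s, w s * F (c + Pi.single s 1)) := by
  unfold E
  rw [← (Fin.consEquiv (fun _ : Fin (n+1) => α)).sum_comp, Fintype.sum_prod_type, Finset.sum_comm]
  refine Finset.sum_congr rfl fun ω _ => ?_
  rw [Finset.mul_sum]
  refine Finset.sum_congr rfl fun s _ => ?_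
  simp only [Fin.consEquiv, Equiv.coe_fn_mk, Fin.prod_univ_succ, Fin.cons_zero, Fin.cons_succ]
  rw [cnt_cons]; ring

lemma E_zero (w : α → ℝ) (F : (α → ℕ) → ℝ) : E w 0 F = F 0 := by
  unfold E
  have : cnt (default : Fin 0 → α) = 0 := by funext s; simp [cnt]
  simp [this]

lemma E_add (w : α → ℝ) (n : ℕ) (F G : (α → ℕ) → ℝ) :
    E w n (fun c => F c + G c) = E w n F + E w n G := by
  simp [E, mul_add, Finset.sum_add_distrib]

lemma E_sub (w : α → ℝ) (n : ℕ) (F G : (α → ℕ) → ℝ) :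
    E w n (fun c => F c - G c) = E w n F - E w n G := by
  simp [E, mul_sub, Finset.sum_sub_distrib]

lemma E_mul (w : α → ℝ) (n : ℕ) (r : ℝ) (F : (α → ℕ) → ℝ) :
    E w n (fun c => r * F c) = r * E w n F := by
  simp only [E, Finset.mul_sum]
  exact Finset.sum_congr rfl fun _ _ => by ring

lemma E_sum {β : Type*} [Fintype β] (w : α → ℝ) (n : ℕ) (F : β → (α → ℕ) → ℝ) :
    E w n (fun c => ∑ b, F b c) = ∑ b, E w n (F b) := by
  simp only [E, Finset.mul_sum]
  exact Finset.sum_comm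

lemma E_mono {w : α → ℝ} (hw : ∀ s, 0 ≤ w s) (n : ℕ) {F G : (α → ℕ) → ℝ} (h : ∀ c, F c ≤ G c) :
    E w n F ≤ E w n G :=
  Finset.sum_le_sum fun ω _ => mul_le_mul_of_nonneg_left (h _) (Finset.prod_nonneg fun _ _ => hw _)

lemma E_const {w : α → ℝ} (h1 : ∑ s, w s = 1) (n : ℕ) (r : ℝ) : E w n (fun _ => r) = r := by
  induction n with
  | zero => simp [E_zero]
  | succ n ih => rw [E_succ]; simpa [← Finset.sum_mul, h1] using ih

lemma E_congr (w : α → ℝ) (n : ℕ) {F G : (α → ℕ) → ℝ} (h : ∀ c, F c = G c) :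
    E w n F = E w n G := by rw [funext h]

lemma stein (w : α → ℝ) (h1 : ∑ s, w s = 1) (n : ℕ) (s : α) (F : (α → ℕ) → ℝ) :
    E w (n+1) (fun c => (c s : ℝ) * F c) = (n+1) * (w s * E w n (fun c => F (c + Pi.single s 1))) := by
  have key : ∀ (n : ℕ) (F : (α → ℕ) → ℝ), E w (n+1) (fun c => (c s : ℝ) * F c) =
      E w n (fun c => (c s : ℝ) * ∑ t, w t * F (c + Pi.single t 1))
      + w s * E w n (fun c => F (c + Pi.single s 1)) := by
    intro n F
    rw [E_succ, ← E_mul, ← E_add]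
    refine E_congr w n fun c => ?_
    have : ∀ t, w t * (((c + Pi.single t 1 : α → ℕ) s : ℝ) * F (c + Pi.single t 1)) =
        c s * (w t * F (c + Pi.single t 1)) + (if s = t then w t * F (c + Pi.single t 1) else 0) := by
      intro t
      by_cases h : s = t
      · subst h; simp; ring
      · simp [h]; ring
    refine (Finset.sum_congr rfl fun t _ => this t).trans ?_
    simp [Finset.sum_add_distrib, Finset.mul_sum]
  induction n generalizing F with
  | zero => rw [key, E_zero]; simp
  | succ n ih =>
    rw [key, ih]
    have : E w n (fun c => ∑ t, w t * F (c + Pi.single s 1 + Pi.single t 1)) =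
      E w (n+1) (fun c => F (c + Pi.single s 1)) := by
      rw [E_succ]
      refine E_congr w n fun c => Finset.sum_congr rfl fun t _ => ?_
      rw [add_right_comm]
    rw [this]; push_cast; ring

lemma T_var {w : α → ℝ} (hw : ∀ s, 0 ≤ w s) (h1 : ∑ s, w s = 1) (f : α → ℝ) (g : ℝ) :
    ∑ s, w s * f s ^ 2 - (∑ s, w s * f s) ^ 2 ≤ ∑ s, w s * (f s - g) ^ 2 := by
  have : ∑ s, w s * (f s - g) ^ 2 = ∑ s, w s * f s ^ 2 - 2 * g * (∑ s, w s * f s) + g ^ 2 := by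
    have e : ∀ s, w s * (f s - g) ^ 2 = w s * f s ^ 2 - 2 * g * (w s * f s) + g ^ 2 * w s := by
      intro s; ring
    simp only [e, Finset.sum_add_distrib, Finset.sum_sub_distrib, ← Finset.mul_sum, h1, mul_one]
  rw [this]
  nlinarith [sq_nonneg (∑ s, w s * f s - g)]

lemma T_jensen {w : α → ℝ} (hw : ∀ s, 0 ≤ w s) (h1 : ∑ s, w s = 1) (f : α → ℝ) :
    (∑ s, w s * f s) ^ 2 ≤ ∑ s, w s * f s ^ 2 := by
  have e : ∑ s, w s * (f s - ∑ t, w t * f t) ^ 2 = ∑ s, w s * f s ^ 2 - (∑ t, w t * f t) ^ 2 := by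
    have e : ∀ s, w s * (f s - ∑ t, w t * f t) ^ 2 = w s * f s ^ 2
       - 2 * (∑ t, w t * f t) * (w s * f s) + (∑ t, w t * f t) ^ 2 * w s := by
      intro s; ring
    simp only [e, Finset.sum_add_distrib, Finset.sum_sub_distrib, ← Finset.mul_sum, h1, mul_one]
    ring
  have : 0 ≤ ∑ s, w s * (f s - ∑ t, w t * f t) ^ 2 :=
    Finset.sum_nonneg fun s _ => mul_nonneg (hw s) (sq_nonneg _)
  linarith

lemma E_jensen {w : α → ℝ} (hw : ∀ s, 0 ≤ w s) (h1 : ∑ s, w s = 1) (n : ℕ) (F : (α → ℕ) → ℝ) :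
    E w n (fun c => (F c - E w n F) ^ 2) = E w n (fun c => F c ^ 2) - (E w n F) ^ 2 := by
  have : ∀ c, (F c - E w n F) ^ 2 = F c ^ 2 - (2 * E w n F) * F c + (E w n F) ^ 2 := by
    intro c; ring
  simp only [this]
  rw [E_add, E_sub, E_mul, E_const h1]; ring

lemma E_sq_le {w : α → ℝ} (hw : ∀ s, 0 ≤ w s) (h1 : ∑ s, w s = 1) (n : ℕ) (F : (α → ℕ) → ℝ) :
    (E w n F) ^ 2 ≤ E w n (fun c => F c ^ 2) := by
  have h := E_jensen hw h1 n F
  have h2 : E w n (fun _ => (0:ℝ)) ≤ E w n (fun c => (F c - E w n F) ^ 2) :=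
    E_mono hw n fun c => sq_nonneg _
  rw [E_const h1] at h2
  linarith

lemma efron_stein {w : α → ℝ} (hw : ∀ s, 0 ≤ w s) (h1 : ∑ s, w s = 1) (n : ℕ)
    (F : (α → ℕ) → ℝ) :
    E w (n+1) (fun c => F c ^ 2) - (E w (n+1) F) ^ 2 ≤
      (n+1) * E w n (fun c => ∑ s, w s * (F (c + Pi.single s 1) - F c) ^ 2) := by
  induction n generalizing F with
  | zero =>
    simp only [E_succ, E_zero]
    have := T_var hw h1 (fun s => F (0 + Pi.single s 1)) (F 0)
    simpa using this
  | succ n ih =>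
    set TF : (α → ℕ) → ℝ := fun c => ∑ s, w s * F (c + Pi.single s 1) with hTF
    have i1 := ih TF
    have e1 : E w (n+1+1) F = E w (n+1) TF := E_succ _ _ _
    have e2 : E w (n+1+1) (fun c => F c ^ 2) - E w (n+1) (fun c => TF c ^ 2) ≤
        E w (n+1) (fun c => ∑ s, w s * (F (c + Pi.single s 1) - F c) ^ 2) := by
      rw [E_succ w (n+1), ← E_sub]
      exact E_mono hw _ fun c => T_var hw h1 (fun s => F (c + Pi.single s 1)) (F c)
    have e3 : E w n (fun c => ∑ s, w s * (TF (c + Pi.single s 1) - TF c) ^ 2) ≤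
        E w (n+1) (fun c => ∑ s, w s * (F (c + Pi.single s 1) - F c) ^ 2) := by
      rw [E_succ w n]
      refine E_mono hw _ fun c => ?_
      simp only [Finset.mul_sum]
      rw [Finset.sum_comm]
      refine Finset.sum_le_sum fun s _ => ?_
      have := T_jensen hw h1 (fun t => F (c + Pi.single t 1 + Pi.single s 1) - F (c + Pi.single t 1))
      have e : TF (c + Pi.single s 1) - TF c =
        ∑ t, w t * (F (c + Pi.single t 1 + Pi.single s 1) - F (c + Pi.single t 1)) := by
        simp only [hTF, mul_sub, Finset.sum_sub_distrib]
        congr 1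
        exact Finset.sum_congr rfl fun t _ => by rw [add_right_comm]
      rw [e]
      calc _ ≤ w s * _ := mul_le_mul_of_nonneg_left this (hw s)
        _ = _ := by rw [Finset.mul_sum]; exact Finset.sum_congr rfl fun t _ => by ring
    rw [e1]
    have hn : (0:ℝ) ≤ n + 1 := by positivity
    have := mul_le_mul_of_nonneg_left e3 hn
    push_cast
    linarith


lemma stein_pair {w : α → ℝ} (h1 : ∑ s, w s = 1) {s t : α} (hst : s ≠ t) (n : ℕ) (h : ℕ → ℝ) :
    E w (n+1) (fun c => ((c s + c t : ℕ) : ℝ) * h (c s + c t)) =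
      (n+1) * ((w s + w t) * E w n (fun c => h (c s + c t + 1))) := by
  have : ∀ c : α → ℕ, ((c s + c t : ℕ) : ℝ) * h (c s + c t) =
    c s * h (c s + c t) + c t * h (c s + c t) := by intro c; push_cast; ring
  rw [E_congr w _ this, E_add, stein w h1 n s (fun c => h (c s + c t)),
    stein w h1 n t (fun c => h (c s + c t))]
  have e1 : ∀ c : α → ℕ, h ((c + Pi.single s 1 : α → ℕ) s + (c + Pi.single s 1 : α → ℕ) t) = h (c s + c t + 1) := by
    intro c; simp [hst.symm]; congr 1; ring
  have e2 : ∀ c : α → ℕ, h ((c + Pi.single t 1 : α → ℕ) s + (c + Pi.single t 1 : α → ℕ) t) = h (c s + c t + 1) := by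
    intro c; simp [hst]; congr 1
  rw [E_congr w n e1, E_congr w n e2]; ring

lemma inv1 {w : α → ℝ} (hw : ∀ s, 0 ≤ w s) (h1 : ∑ s, w s = 1) {s t : α} (hst : s ≠ t) (n : ℕ) : (n+1) * ((w s + w t) * E w n (fun c => 1 / (((c s + c t : ℕ):ℝ) + 1))) ≤ 1 := by
  have := stein_pair h1 hst n (fun m => 1 / (m : ℝ))
  push_cast at this ⊢
  rw [← this]
  refine (E_mono hw _ (G := fun _ => 1) fun c => ?_).trans (E_const h1 _ _).le
  rw [mul_one_div]
  exact div_self_le_one _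

lemma inv2 {w : α → ℝ} (hw : ∀ s, 0 ≤ w s) (h1 : ∑ s, w s = 1) {s t : α} (hst : s ≠ t) (n : ℕ) : (n+1) * (n + 2) * ((w s + w t)^2 *
    E w n (fun c => 1 / ((((c s + c t : ℕ):ℝ) + 1) * (((c s + c t : ℕ):ℝ) + 2)))) ≤ 1 := by
  have e := stein_pair h1 hst n (fun m => 1 / ((m : ℝ) * (m + 1)))
  have i := inv1 hw h1 hst (n+1)
  have e' : E w n (fun c => 1 / ((((c s + c t : ℕ):ℝ) + 1) * (((c s + c t : ℕ):ℝ) + 2))) =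
     E w n (fun c => 1 / (((c s + c t + 1 : ℕ):ℝ) * (((c s + c t + 1 : ℕ):ℝ) + 1))) :=
    E_congr w n fun c => by push_cast; ring_nf
  have hm : E w (n+1) (fun c => ((c s + c t : ℕ) : ℝ) * (1 / (((c s + c t : ℕ) : ℝ) * (((c s + c t : ℕ) : ℝ) + 1))))
     ≤ E w (n+1) (fun c => 1 / (((c s + c t : ℕ):ℝ) + 1)) := by
    refine E_mono hw _ fun c => ?_
    generalize c s + c t = m
    rcases Nat.eq_zero_or_pos m with h | h
    · subst h; simp
    · have : (0:ℝ) < m := by exact_mod_cast h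
      apply le_of_eq; field_simp
  rw [e'] 
  have hq : 0 ≤ w s + w t := add_nonneg (hw s) (hw t)
  have h3 := mul_le_mul_of_nonneg_left hm (mul_nonneg (by positivity : (0:ℝ) ≤ (n:ℝ) + 1 + 1) hq)
  rw [e] at h3
  push_cast at i h3 ⊢
  nlinarith

lemma sq_id {w : α → ℝ} (h1 : ∑ s, w s = 1) {s t : α} (hst : s ≠ t) (n : ℕ) (h : ℕ → ℝ) :
    E w n (fun c => (w s * c t - w t * c s) ^ 2 * h (c s + c t)) =
      w s * w t * E w n (fun c => ((c s + c t : ℕ) : ℝ) * h (c s + c t)) := by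
  cases n with
  | zero => simp [E_zero]
  | succ n =>
    rw [stein_pair h1 hst]
    have : ∀ c : α → ℕ, (w s * c t - w t * c s) ^ 2 * h (c s + c t) =
      c t * (w s * ((w s * c t - w t * c s) * h (c s + c t))) -
      c s * (w t * ((w s * c t - w t * c s) * h (c s + c t))) := by intro c; ring
    rw [E_congr w _ this, E_sub, stein w h1 n t (fun c => (w s * ((w s * c t - w t * c s) * h (c s + c t)))),
      stein w h1 n s (fun c => (w t * ((w s * c t - w t * c s) * h (c s + c t))))]
    have e1 : ∀ c : α → ℕ, (fun c : α → ℕ => (w s * ((w s * c t - w t * c s) * h (c s + c t)))) (c + Pi.single t 1)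
        = w s * ((w s * (c t + 1) - w t * c s) * h (c s + c t + 1)) := by
      intro c; simp [hst]; left; left; congr 1
    have e2 : ∀ c : α → ℕ, (fun c : α → ℕ => (w t * ((w s * c t - w t * c s) * h (c s + c t)))) (c + Pi.single s 1)
        = w t * ((w s * c t - w t * (c s + 1)) * h (c s + c t + 1)) := by
      intro c; simp [hst.symm]; left; left; congr 1; ring
    rw [E_congr w n e1, E_congr w n e2]
    rw [E_mul, E_mul]
    have : ∀ X Y Z : ℝ, X - Y = (w s + w t) * Z → (n+1) * (w t * (w s * X)) - (n+1) * (w s * (w t * Y)) =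
      w s * w t * ((n+1) * ((w s + w t) * Z)) := by
      intro X Y Z h; rw [← h]; ring
    apply this
    rw [← E_sub, ← E_mul]
    refine E_congr w n fun c => ?_
    ring

/-- acceptance ratio -/
noncomputable def Rf (k l : ℕ) : ℝ :=
  if k + l = 0 then 1 else max 0 (((k : ℝ) - l) / ((k : ℝ) + l))

lemma Rf_inc1 (k l : ℕ) (h : 1 ≤ k + l) :
    (Rf (k+1) l - Rf k l)^2 ≤ (2 * l / (((k + l : ℕ) : ℝ) * ((k + l : ℕ) + 1)))^2 := by
  have hm : (0:ℝ) < (k:ℝ) + l := by exact_mod_cast h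
  rw [Rf, Rf, if_neg (by omega), if_neg (by omega)]
  apply sq_le_sq.mpr
  rw [max_comm 0, max_comm 0]
  refine (abs_max_sub_max_le_abs _ _ _).trans (le_of_eq ?_)
  congr 1
  push_cast
  field_simp
  ring

lemma Rf_inc2 (k l : ℕ) (h : 1 ≤ k + l) :
    (Rf k (l+1) - Rf k l)^2 ≤ (2 * k / (((k + l : ℕ) : ℝ) * ((k + l : ℕ) + 1)))^2 := by
  have hm : (0:ℝ) < (k:ℝ) + l := by exact_mod_cast h
  rw [Rf, Rf, if_neg (by omega), if_neg (by omega)]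
  apply sq_le_sq.mpr
  rw [← abs_neg (2 * (k:ℝ) / _)]
  rw [max_comm 0, max_comm 0]
  refine (abs_max_sub_max_le_abs _ _ _).trans (le_of_eq ?_)
  congr 1
  push_cast
  field_simp
  ring

lemma Rf_var (a b : ℝ) (ha : 0 ≤ a) (hb : 0 ≤ b) (k l : ℕ) :
    (a + b) * (a * (Rf (k+1) l - Rf k l)^2 + b * (Rf k (l+1) - Rf k l)^2) ≤
      (if k + l ≤ 1 then b * (a + b) else 0) +
      ((a * l - b * k)^2 + a * b * ((k + l : ℕ):ℝ)^2) *
        (if k + l ≤ 1 then 0 else 4 / (((k + l : ℕ):ℝ)^2 * (((k + l : ℕ):ℝ)+1)^2)) := by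
  by_cases h : k + l ≤ 1
  · have : (k = 0 ∧ l = 0) ∨ (k = 1 ∧ l = 0) ∨ (k = 0 ∧ l = 1) := by omega
    rcases this with ⟨rfl, rfl⟩ | ⟨rfl, rfl⟩ | ⟨rfl, rfl⟩
    · norm_num [Rf]; nlinarith
    · norm_num [Rf]; nlinarith
    · norm_num [Rf]; nlinarith [mul_nonneg hb (add_nonneg ha hb)]
  · rw [if_neg h, if_neg h, zero_add]
    have i1 := mul_le_mul_of_nonneg_left (Rf_inc1 k l (by omega)) ha
    have i2 := mul_le_mul_of_nonneg_left (Rf_inc2 k l (by omega)) hb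
    have := mul_le_mul_of_nonneg_left (add_le_add i1 i2) (add_nonneg ha hb)
    refine this.trans (le_of_eq ?_)
    have hm : (0:ℝ) < ((k + l : ℕ):ℝ) := by exact_mod_cast (by omega : 0 < k + l)
    field_simp
    push_cast
    ring

lemma var_term {w : α → ℝ} (hw : ∀ s, 0 ≤ w s) (h1 : ∑ s, w s = 1) {s t : α} (hst : s ≠ t) (n : ℕ)
    (hq : 0 < w s + w t) :
    ((n:ℝ)+1)^2 * ((w s + w t)^2 * E w n (fun c => w s * (Rf (c s + 1) (c t) - Rf (c s) (c t))^2 +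
      w t * (Rf (c s) (c t + 1) - Rf (c s) (c t))^2)) ≤ 8 * w t := by
  have ha := hw s
  have hb := hw t
  set X := E w n (fun c => w s * (Rf (c s + 1) (c t) - Rf (c s) (c t))^2 +
      w t * (Rf (c s) (c t + 1) - Rf (c s) (c t))^2) with hX
  let h : ℕ → ℝ := fun m => if m ≤ 1 then 0 else 4 / ((m:ℝ)^2 * ((m:ℝ)+1)^2)
  let g : ℕ → ℝ := fun m => if m ≤ 1 then w t * (w s + w t) else 0
  have s1 : (w s + w t) * X ≤ E w n (fun c => (g (c s + c t)
      + (w s * w t) * (((c s + c t : ℕ):ℝ)^2 * h (c s + c t)))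
      + (w s * c t - w t * c s)^2 * h (c s + c t)) := by
    rw [hX, ← E_mul]
    refine E_mono hw n fun c => ?_
    refine (Rf_var (w s) (w t) ha hb (c s) (c t)).trans (le_of_eq ?_)
    simp only [g, h]; ring
  rw [E_add, sq_id h1 hst, ← E_mul w n (w s * w t), ← E_add] at s1
  have s2 : (w s + w t) * X ≤ (8 * w t * (w s + w t)) * E w n (fun c => 1 / ((((c s + c t : ℕ):ℝ) + 1) * (((c s + c t : ℕ):ℝ) + 2))) := by
    refine s1.trans ?_
    rw [← E_mul]
    refine E_mono hw n fun c => ?_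
    generalize c s + c t = m
    simp only [g, h]
    by_cases hm : m ≤ 1
    · have hbq : 0 ≤ w t * (w s + w t) := mul_nonneg hb hq.le
      interval_cases m <;> norm_num <;> nlinarith
    · rw [if_neg hm, if_neg hm]
      have hm' : (2:ℝ) ≤ m := by exact_mod_cast (by omega : 2 ≤ m)
      have e : 0 + w s * w t * ((m:ℝ)^2 * (4 / ((m:ℝ)^2 * ((m:ℝ)+1)^2))) + w s * w t * ((m:ℝ) * (4 / ((m:ℝ)^2 * ((m:ℝ)+1)^2)))
        = w t * w s * (4 / (m * (m+1))) := by
        have : (m:ℝ) ≠ 0 := by positivity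
        field_simp
        ring
      rw [e]
      have e2 : 4 / ((m:ℝ) * (m+1)) ≤ 8 * (1 / ((m+1) * (m+2))) := by
        rw [mul_one_div, div_le_div_iff₀ (by positivity) (by positivity)]
        nlinarith
      have e3 : 0 ≤ 1 / (((m:ℝ)+1) * (m+2)) := by positivity
      have e4 := mul_le_mul_of_nonneg_left e2 (mul_nonneg hb ha)
      have e5 := mul_nonneg (mul_nonneg hb hb) e3
      nlinarith
  have s3 := inv2 hw h1 hst n
  set Y := E w n (fun c => 1 / ((((c s + c t : ℕ):ℝ) + 1) * (((c s + c t : ℕ):ℝ) + 2)))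
  have hY : 0 ≤ Y := by
    have : E w n (fun _ => 0) ≤ Y := E_mono hw n fun c => by positivity
    rwa [E_const h1] at this
  have hXY : X ≤ 8 * w t * Y := by
    refine le_of_mul_le_mul_left ?_ hq
    linarith
  calc _ ≤ ((n:ℝ)+1)^2 * ((w s + w t)^2 * (8 * w t * Y)) := by gcongr
    _ = 8 * w t * (((n:ℝ)+1) * (n+1) * ((w s + w t)^2 * Y)) := by ring
    _ ≤ 8 * w t * (((n:ℝ)+1) * (n+2) * ((w s + w t)^2 * Y)) := by gcongr; norm_num
    _ ≤ 8 * w t * 1 := by gcongr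
    _ = _ := by ring

lemma mean_term {w : α → ℝ} (hw : ∀ s, 0 ≤ w s) (h1 : ∑ s, w s = 1) {s t : α} (hst : s ≠ t) (n : ℕ)
    (hq : 0 < w s + w t) (hba : w t ≤ w s) :
    (n + 1) * ((w s + w t)^3 * E w n (fun c => ((w s - w t) / (w s + w t) - Rf (c s) (c t))^2)) ≤
      8 * (w s * w t) := by
  have ha := hw s
  have hb := hw t
  set X := E w n (fun c => ((w s - w t) / (w s + w t) - Rf (c s) (c t))^2) with hX
  let h : ℕ → ℝ := fun m => if m = 0 then 0 else 4 / (m:ℝ)^2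
  let g : ℕ → ℝ := fun m => if m = 0 then 4 * (w s * w t) else 0
  have s1 : (w s + w t)^2 * X ≤ E w n (fun c => g (c s + c t)
      + (w s * c t - w t * c s)^2 * h (c s + c t)) := by
    rw [hX, ← E_mul]
    refine E_mono hw n fun c => ?_
    rw [← mul_pow, mul_sub, mul_div_cancel₀ _ hq.ne']
    generalize c s = k
    generalize c t = l
    by_cases hm : k + l = 0
    · simp only [g, h, Rf, if_pos hm]
      nlinarith
    · simp only [g, h, Rf, if_neg hm]
      have hm' : (0:ℝ) < (k:ℝ) + l := by exact_mod_cast Nat.pos_of_ne_zero hm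
      have hmu : 0 ≤ (w s - w t) / (w s + w t) := div_nonneg (by linarith) hq.le
      have key : ((w s - w t) / (w s + w t) - max 0 (((k : ℝ) - l) / ((k : ℝ) + l)))^2 ≤
         ((w s - w t) / (w s + w t) - (((k : ℝ) - l) / ((k : ℝ) + l)))^2 := by
        rcases le_total 0 (((k : ℝ) - l) / ((k : ℝ) + l)) with h0 | h0
        · rw [max_eq_right h0]
        · rw [max_eq_left h0]; nlinarith
      have e := mul_le_mul_of_nonneg_left key (sq_nonneg (w s + w t))
      rw [← mul_pow, mul_sub, mul_div_cancel₀ _ hq.ne'] at e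
      refine e.trans (le_of_eq ?_)
      push_cast
      field_simp
      ring
  rw [E_add, sq_id h1 hst, ← E_mul w n (w s * w t), ← E_add] at s1
  have s2 : (w s + w t)^2 * X ≤ (8 * (w s * w t)) * E w n (fun c => 1 / (((c s + c t : ℕ):ℝ) + 1)) := by
    refine s1.trans ?_
    rw [← E_mul]
    refine E_mono hw n fun c => ?_
    generalize c s + c t = m
    have hab := mul_nonneg ha hb
    simp only [g, h]
    by_cases hm : m = 0
    · subst hm; norm_num; linarith
    · rw [if_neg hm, if_neg hm]
      have hm' : (1:ℝ) ≤ m := by exact_mod_cast (by omega : 1 ≤ m)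
      have e2 : (m:ℝ) * (4 / (m:ℝ)^2) ≤ 8 * (1 / ((m:ℝ)+1)) := by
        have : (m:ℝ) * (4 / (m:ℝ)^2) = 4 / m := by field_simp
        rw [this, mul_one_div, div_le_div_iff₀ (by positivity) (by positivity)]
        nlinarith
      nlinarith
  have s3 := inv1 hw h1 hst n
  set Y := E w n (fun c => 1 / (((c s + c t : ℕ):ℝ) + 1))
  have hn : (0:ℝ) ≤ n + 1 := by positivity
  calc _ = (n+1) * (w s + w t) * ((w s + w t)^2 * X) := by ring
    _ ≤ (n+1) * (w s + w t) * (8 * (w s * w t) * Y) := by gcongr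
    _ = 8 * (w s * w t) * ((n+1) * ((w s + w t) * Y)) := by ring
    _ ≤ 8 * (w s * w t) * 1 := by gcongr
    _ = _ := by ring

lemma pi_bound {N : ℕ} [MeasurableSpace α] (μ1 : Measure α) [IsProbabilityMeasure μ1] (w : α → ℝ)
    (hw : ∀ s, 0 ≤ w s) (hμ : ∀ s, μ1 {s} = ENNReal.ofReal (w s)) (P : (α → ℕ) → Prop)
    [DecidablePred P] (δ : ℝ) (hδ : E w N (fun c => if P c then 0 else 1) ≤ δ) (h0 : 0 ≤ δ) :
    ENNReal.ofReal (1 - δ) ≤ (Measure.pi fun _ : Fin N => μ1) {ω | P (cnt ω)} := by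
  set m := (Measure.pi fun _ : Fin N => μ1) with hm
  set A : Set (Fin N → α) := {ω | P (cnt ω)} with hA
  have h1 : (1 : ENNReal) ≤ m A + m Aᶜ := by
    calc (1 : ENNReal) = m Set.univ := by rw [measure_univ]
      _ = m (A ∪ Aᶜ) := by rw [Set.union_compl_self]
      _ ≤ _ := measure_union_le _ _
  have h2 : m Aᶜ ≤ ENNReal.ofReal δ := by
    have hc : Aᶜ = ⋃ ω ∈ (Finset.univ.filter fun ω : Fin N → α => ¬ P (cnt ω)), {ω} := by
      ext ω; simp [hA]
    rw [hc]
    refine (measure_biUnion_finset_le _ _).trans ?_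
    have : ∀ ω : Fin N → α, m {ω} = ENNReal.ofReal (∏ i, w (ω i)) := by
      intro ω
      rw [hm, Measure.pi_singleton, ENNReal.ofReal_prod_of_nonneg (fun i _ => hw _)]
      exact Finset.prod_congr rfl fun i _ => hμ _
    rw [Finset.sum_congr rfl fun ω _ => this ω,
      ← ENNReal.ofReal_sum_of_nonneg (fun ω _ => Finset.prod_nonneg fun i _ => hw _)]
    apply ENNReal.ofReal_le_ofReal
    refine le_trans (le_of_eq ?_) hδ
    rw [Finset.sum_filter]
    unfold E
    refine Finset.sum_congr rfl fun ω _ => ?_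
    by_cases h : P (cnt ω) <;> simp [h]
  rw [ENNReal.ofReal_sub _ h0, ENNReal.ofReal_one]
  rw [tsub_le_iff_right]
  exact h1.trans (add_le_add_right h2 _)

lemma le_of_sq {a b : ℝ} (h : a ^ 2 ≤ b ^ 2) (hb : 0 ≤ b) : a ≤ b := abs_le_of_sq_le_sq' h hb |>.2

end AccRatio

/-- Theorem 2 / Theorem S2, estimation stage, first bound. With
`S = (∑_x √(c₊c₋p⁺ₓp⁻ₓ/(c₊p⁺ₓ + c₋p⁻ₓ)))²`, if the number of samples satisfies
`N ≥ 8γ((1+ε)/ε)²(√S + √(c₋/δ₁))²`, then with probability at least `1 − δ₁` the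
estimated acceptance ratios `R` (built from the counts `N⁺ₓ, N⁻ₓ` of the `N`
i.i.d. samples) satisfy `γ·∑_x |μₓ − Rₓ|·qₓ ≤ ε/(1+ε)`, where `μₓ = pₓ/(γqₓ)` is
the ideal acceptance ratio. -/
theorem acceptance_ratio_estimation_cost_first_bound
    {ι : Type*} [Fintype ι] [DecidableEq ι] [MeasurableSpace ι]
    (pp pm : ι → ℝ)
    (hpp0 : ∀ x, 0 ≤ pp x) (hpp1 : ∑ x, pp x = 1)
    (hpm0 : ∀ x, 0 ≤ pm x) (hpm1 : ∑ x, pm x = 1)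
    (cp cm : ℝ) (hcp : 0 ≤ cp) (hcm : 0 ≤ cm) (hc : cp - cm = 1)
    (γ : ℝ) (hγ : γ = cp + cm)
    (p : ι → ℝ) (hp : ∀ x, p x = cp * pp x - cm * pm x)
    (hp0 : ∀ x, 0 ≤ p x)
    (q : ι → ℝ) (hq : ∀ x, q x = (cp * pp x + cm * pm x) / γ)
    (μ1 : Measure (ι × Bool)) [IsProbabilityMeasure μ1]
    (hμt : ∀ x, μ1 {(x, true)} = ENNReal.ofReal (cp * pp x / γ))
    (hμf : ∀ x, μ1 {(x, false)} = ENNReal.ofReal (cm * pm x / γ))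
    (N : ℕ) (hN : 0 < N)
    (R : ι → (Fin N → ι × Bool) → ℝ)
    (hR : ∀ x ω, R x ω =
      if ((Finset.univ.filter fun i => ω i = (x, true)).card
           + (Finset.univ.filter fun i => ω i = (x, false)).card) = 0
      then 1
      else max 0
        ((((Finset.univ.filter fun i => ω i = (x, true)).card : ℝ)
            - ((Finset.univ.filter fun i => ω i = (x, false)).card : ℝ))
          / (((Finset.univ.filter fun i => ω i = (x, true)).card : ℝ)
            + ((Finset.univ.filter fun i => ω i = (x, false)).card : ℝ))))
    (μid : ι → ℝ) (hμid : ∀ x, μid x = if q x = 0 then 0 else p x / (γ * q x))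
    (S : ℝ)
    (hS : S = (∑ x, Real.sqrt (cp * cm * pp x * pm x / (cp * pp x + cm * pm x))) ^ 2)
    (ε δ₁ : ℝ) (hε : 0 < ε) (hδ₁0 : 0 < δ₁) (hδ₁1 : δ₁ < 1)
    (hNbound : (N : ℝ) ≥ 8 * γ * ((1 + ε) / ε) ^ 2 *
      (Real.sqrt S + Real.sqrt (cm / δ₁)) ^ 2) :
    ENNReal.ofReal (1 - δ₁) ≤
      (Measure.pi fun _ : Fin N => μ1)
        {ω | γ * ∑ x, |μid x - R x ω| * q x ≤ ε / (1 + ε)} := by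
  have hγ1 : 0 < γ := by linarith
  let w : ι × Bool → ℝ := fun s => if s.2 then cp * pp s.1 / γ else cm * pm s.1 / γ
  have wt : ∀ x, w (x, true) = cp * pp x / γ := fun x => by simp [w]
  have wf : ∀ x, w (x, false) = cm * pm x / γ := fun x => by simp [w]
  have hw : ∀ s, 0 ≤ w s := by
    rintro ⟨x, _ | _⟩
    · rw [wf]; exact div_nonneg (mul_nonneg hcm (hpm0 x)) hγ1.le
    · rw [wt]; exact div_nonneg (mul_nonneg hcp (hpp0 x)) hγ1.le
  have hbsum : ∑ x, w (x, false) = cm / γ := by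
    simp only [wf, ← Finset.sum_div, ← Finset.mul_sum, hpm1, mul_one]
  have h1 : ∑ s, w s = 1 := by
    rw [Fintype.sum_prod_type]
    simp only [Fintype.sum_bool, Finset.sum_add_distrib, hbsum]
    simp only [wt, ← Finset.sum_div, ← Finset.mul_sum, hpp1, mul_one]
    rw [← add_div, ← hγ, div_self hγ1.ne']
  have hμ : ∀ s, μ1 {s} = ENNReal.ofReal (w s) := by
    rintro ⟨x, _ | _⟩
    · rw [wf]; exact hμf x
    · rw [wt]; exact hμt x
  have hqw : ∀ x, q x = w (x, true) + w (x, false) := by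
    intro x; rw [hq, wt, wf, add_div]
  have hq0 : ∀ x, 0 ≤ q x := fun x => by rw [hqw]; exact add_nonneg (hw _) (hw _)
  have hst : ∀ x : ι, (x, true) ≠ (x, false) := fun x => by simp
  let D : (ι × Bool → ℕ) → ℝ := fun c =>
    γ * ∑ x, |μid x - AccRatio.Rf (c (x, true)) (c (x, false))| * q x
  set t := ε / (1 + ε) with ht
  have ht0 : 0 < t := by positivity
  have hset : {ω : Fin N → ι × Bool | γ * ∑ x, |μid x - R x ω| * q x ≤ t} =
      {ω | D (AccRatio.cnt ω) ≤ t} := by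
    ext ω
    simp only [Set.mem_ofPred_eq, D, hR, AccRatio.Rf, AccRatio.cnt]
    first | done | exact Iff.rfl | convert Iff.rfl
  rw [hset]
  refine AccRatio.pi_bound μ1 w hw hμ (fun c => D c ≤ t) δ₁ ?_ hδ₁0.le
  have hNr : (0:ℝ) < N := by exact_mod_cast hN
  -- mean bound
  set r := Real.sqrt (8 * γ / N) with hr
  have hr2 : r ^ 2 = 8 * γ / N := Real.sq_sqrt (by positivity)
  have hr0 : 0 < r := Real.sqrt_pos.mpr (by positivity)
  have hterm : ∀ x, 0 ≤ cp * cm * pp x * pm x / (cp * pp x + cm * pm x) := fun x =>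
    div_nonneg (mul_nonneg (mul_nonneg (mul_nonneg hcp hcm) (hpp0 x)) (hpm0 x))
      (add_nonneg (mul_nonneg hcp (hpp0 x)) (mul_nonneg hcm (hpm0 x)))
  have hsS : Real.sqrt S = ∑ x, Real.sqrt (cp * cm * pp x * pm x / (cp * pp x + cm * pm x)) := by
    rw [hS, Real.sqrt_sq (Finset.sum_nonneg fun x _ => Real.sqrt_nonneg _)]
  have hED : AccRatio.E w N D = ∑ x, γ * (q x * AccRatio.E w N (fun c =>
      |μid x - AccRatio.Rf (c (x, true)) (c (x, false))|)) := by
    simp only [← AccRatio.E_mul, ← AccRatio.E_sum]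
    refine AccRatio.E_congr w N fun c => ?_
    simp only [D, Finset.mul_sum]
    exact Finset.sum_congr rfl fun x _ => by ring
  have hmean : AccRatio.E w N D ≤ r * Real.sqrt S := by
    rw [hED, hsS, Finset.mul_sum]
    refine Finset.sum_le_sum fun x _ => ?_
    rcases (hq0 x).eq_or_lt with h0 | h0
    · rw [← h0]; simp only [zero_mul, mul_zero]
      exact mul_nonneg hr0.le (Real.sqrt_nonneg _)
    set M := AccRatio.E w N (fun c => |μid x - AccRatio.Rf (c (x, true)) (c (x, false))|) with hM
    have hMsq := AccRatio.E_sq_le hw h1 N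
      (fun c => |μid x - AccRatio.Rf (c (x, true)) (c (x, false))|)
    rw [← hM] at hMsq
    simp only [sq_abs] at hMsq
    have hba : w (x, false) ≤ w (x, true) := by
      rw [wf, wt]
      have := hp0 x
      rw [hp] at this
      exact div_le_div_of_nonneg_right (by linarith) hγ1.le
    have hmt := AccRatio.mean_term hw h1 (hst x) N (by rw [← hqw]; exact h0) hba
    have hμx : μid x = (w (x, true) - w (x, false)) / (w (x, true) + w (x, false)) := by
      rw [hμid, if_neg h0.ne', ← hqw, wt, wf, hp]
      field_simp
    rw [← hμx, ← hqw] at hmt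
    set X := AccRatio.E w N (fun c => (μid x - AccRatio.Rf (c (x, true)) (c (x, false))) ^ 2)
    have hX0 : 0 ≤ X := le_trans (sq_nonneg _) hMsq
    have htermeq : cp * cm * pp x * pm x / (cp * pp x + cm * pm x) =
        γ * (w (x, true) * w (x, false)) / q x := by
      have e1 : cp * pp x = γ * w (x, true) := by rw [wt]; field_simp
      have e2 : cm * pm x = γ * w (x, false) := by rw [wf]; field_simp
      have e3 : cp * cm * pp x * pm x = (cp * pp x) * (cm * pm x) := by ring
      rw [e3, e1, e2, ← mul_add, ← hqw]
      field_simp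
    refine AccRatio.le_of_sq ?_ (mul_nonneg hr0.le (Real.sqrt_nonneg _))
    rw [mul_pow r, Real.sq_sqrt (hterm x), htermeq, hr2, div_mul_div_comm, le_div_iff₀ (by positivity)]
    have hmt2 : (N:ℝ) * (q x ^ 3 * X) ≤ 8 * (w (x, true) * w (x, false)) := by
      have : 0 ≤ q x ^ 3 * X := by positivity
      linarith
    calc (γ * (q x * M)) ^ 2 * (N * q x) = γ ^ 2 * (N * (q x ^ 3 * M ^ 2)) := by ring
      _ ≤ γ ^ 2 * (N * (q x ^ 3 * X)) := by gcongr
      _ ≤ γ ^ 2 * (8 * (w (x, true) * w (x, false))) := by gcongr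
      _ = _ := by ring
  -- variance bound
  have hvar : N * AccRatio.E w N (fun c => (D c - AccRatio.E w N D) ^ 2) ≤ 8 * γ * cm := by
    rw [AccRatio.E_jensen hw h1]
    obtain ⟨n, rfl⟩ : ∃ n, N = n + 1 := ⟨N - 1, by omega⟩
    have hes := AccRatio.efron_stein hw h1 n D
    have hone : ∀ (x : ι) (c c' : ι × Bool → ℕ), (∀ y, y ≠ x → ∀ b, c' (y, b) = c (y, b)) →
        (D c' - D c) ^ 2 ≤ γ ^ 2 * (q x ^ 2 * (AccRatio.Rf (c' (x, true)) (c' (x, false)) -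
          AccRatio.Rf (c (x, true)) (c (x, false))) ^ 2) := by
      intro x c c' hcc
      have e : D c' - D c = γ * (q x * (|μid x - AccRatio.Rf (c' (x, true)) (c' (x, false))| -
          |μid x - AccRatio.Rf (c (x, true)) (c (x, false))|)) := by
        simp only [D]
        rw [← mul_sub, ← Finset.sum_sub_distrib, Finset.sum_eq_single x]
        · ring
        · intro y _ hy
          rw [hcc y hy, hcc y hy, sub_self]
        · simp
      rw [e, mul_pow, mul_pow]
      gcongr _ * (_ * ?_)
      apply sq_le_sq.mpr
      refine (abs_abs_sub_abs_le_abs_sub _ _).trans (le_of_eq ?_)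
      rw [abs_sub_comm]
      congr 1
      ring
    have hb2 : AccRatio.E w n (fun c => ∑ s, w s * (D (c + Pi.single s 1) - D c) ^ 2) ≤
        ∑ x, γ ^ 2 * (q x ^ 2 * AccRatio.E w n (fun c =>
          w (x, true) * (AccRatio.Rf (c (x, true) + 1) (c (x, false)) -
            AccRatio.Rf (c (x, true)) (c (x, false))) ^ 2 +
          w (x, false) * (AccRatio.Rf (c (x, true)) (c (x, false) + 1) -
            AccRatio.Rf (c (x, true)) (c (x, false))) ^ 2)) := by
      simp only [← AccRatio.E_mul, ← AccRatio.E_sum]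
      refine AccRatio.E_mono hw n fun c => ?_
      rw [Fintype.sum_prod_type]
      refine Finset.sum_le_sum fun x _ => ?_
      rw [Fintype.sum_bool]
      have i1 := hone x c (c + Pi.single (x, true) 1) (by
        intro y hy b; simp [hy])
      have i2 := hone x c (c + Pi.single (x, false) 1) (by
        intro y hy b; simp [hy])
      simp at i1 i2
      have j1 := mul_le_mul_of_nonneg_left i1 (hw (x, true))
      have j2 := mul_le_mul_of_nonneg_left i2 (hw (x, false))
      refine (add_le_add j1 j2).trans (le_of_eq ?_)
      ring
    have hn : (0:ℝ) < n + 1 := by positivity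
    push_cast
    calc _ ≤ ((n:ℝ) + 1) * ((n + 1) * _) := mul_le_mul_of_nonneg_left hes hn.le
      _ ≤ ((n:ℝ) + 1) * ((n + 1) * _) :=
          mul_le_mul_of_nonneg_left (mul_le_mul_of_nonneg_left hb2 hn.le) hn.le
      _ ≤ ∑ x, γ ^ 2 * (8 * w (x, false)) := by
          rw [Finset.mul_sum, Finset.mul_sum]
          refine Finset.sum_le_sum fun x _ => ?_
          rcases (hq0 x).eq_or_lt with h0 | h0
          · rw [← h0]; simp
            exact mul_nonneg (sq_nonneg _) (mul_nonneg (by norm_num) (hw _))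
          · have := AccRatio.var_term hw h1 (hst x) n (by rw [← hqw]; exact h0)
            rw [← hqw] at this
            refine le_trans (le_of_eq ?_) (mul_le_mul_of_nonneg_left this (sq_nonneg γ))
            ring
      _ = 8 * γ * cm := by
          rw [← Finset.mul_sum, ← Finset.mul_sum, hbsum]
          field_simp
  -- threshold
  have hS0 : 0 ≤ Real.sqrt S + Real.sqrt (cm / δ₁) := add_nonneg (Real.sqrt_nonneg _) (Real.sqrt_nonneg _)
  have hthr : r * (Real.sqrt S + Real.sqrt (cm / δ₁)) ≤ t := by
    refine AccRatio.le_of_sq ?_ ht0.le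
    rw [mul_pow, hr2, div_mul_eq_mul_div, div_le_iff₀ hNr]
    have e : t ^ 2 * (8 * γ * ((1 + ε) / ε) ^ 2 * (Real.sqrt S + Real.sqrt (cm / δ₁)) ^ 2) =
       8 * γ * (Real.sqrt S + Real.sqrt (cm / δ₁)) ^ 2 := by
      rw [ht]; field_simp
    rw [← e]
    exact mul_le_mul_of_nonneg_left hNbound (sq_nonneg t)
  rcases hcm.eq_or_lt with h0 | h0
  · have hSz : Real.sqrt S = 0 := by
      rw [hsS]; simp [← h0]
    rw [hSz, mul_zero] at hmean
    have hD0 : ∀ c, 0 ≤ D c := fun c => mul_nonneg hγ1.le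
      (Finset.sum_nonneg fun x _ => mul_nonneg (abs_nonneg _) (hq0 x))
    have : AccRatio.E w N (fun c => if D c ≤ t then 0 else 1) ≤ AccRatio.E w N (fun c => t⁻¹ * D c) := by
      refine AccRatio.E_mono hw N fun c => ?_
      split_ifs with hc
      · exact mul_nonneg (by positivity) (hD0 c)
      · rw [inv_mul_eq_div, le_div_iff₀ ht0]; linarith
    refine this.trans ?_
    rw [AccRatio.E_mul]
    have : t⁻¹ * AccRatio.E w N D ≤ 0 := mul_nonpos_of_nonneg_of_nonpos (by positivity) hmean
    linarith
  · set B := r * Real.sqrt (cm / δ₁) with hB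
    have hB0 : 0 < B := mul_pos hr0 (Real.sqrt_pos.mpr (by positivity))
    have hB2 : B ^ 2 = 8 * γ / N * (cm / δ₁) := by
      rw [hB, mul_pow, hr2, Real.sq_sqrt (by positivity)]
    have : AccRatio.E w N (fun c => if D c ≤ t then 0 else 1) ≤
        AccRatio.E w N (fun c => (B ^ 2)⁻¹ * (D c - AccRatio.E w N D) ^ 2) := by
      refine AccRatio.E_mono hw N fun c => ?_
      split_ifs with hc
      · positivity
      · rw [inv_mul_eq_div, le_div_iff₀ (by positivity), one_mul]
        have : B ≤ D c - AccRatio.E w N D := by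
          rw [mul_add] at hthr
          linarith
        gcongr
    refine this.trans ?_
    rw [AccRatio.E_mul, inv_mul_le_iff₀ (by positivity), hB2]
    have e : 8 * γ / N * (cm / δ₁) * δ₁ = (8 * γ * cm) / N := by field_simp
    rw [e, le_div_iff₀ hNr]
    linarith
end

section
/- For ε > 0 and δ₁ ∈ (0,1), if the number of samples N satisfies N ≥ 8·c₋·γ·((1+ε)/ε)²·( ∑_x √(p⁻_x) + δ₁^{−1/2} )², then with probability at least 1 − δ₁ the estimated acceptance ratios satisfy Δ := γ·∑_x |μ_x − R_x|·q_x ≤ ε/(1+ε). (Theorem 2, estimation stage, Rényi-entropy form: the factor ∑_x √(p⁻_x) equals 2^{H_{1/2}(p⁻)/2}.) -/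
open MeasureTheory Finset

noncomputable def arBn (θ : ℝ) : ℕ → (ℕ → ℕ → ℝ) → ℝ
  | 0, F => F 0 0
  | n + 1, F => (1 - θ) * arBn θ n (fun a b => F (a + 1) b) + θ * arBn θ n (fun a b => F a (b + 1))

lemma arBn_congr (θ : ℝ) (n : ℕ) : ∀ (F G : ℕ → ℕ → ℝ), (∀ a b, a + b = n → F a b = G a b) →
    arBn θ n F = arBn θ n G := by
  induction n with
  | zero => intro F G h; exact h 0 0 rfl
  | succ n ih =>
    intro F G h
    simp only [arBn]
    rw [ih _ (fun a b => G (a + 1) b) (fun a b hab => h _ _ (by omega)),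
      ih _ (fun a b => G a (b + 1)) (fun a b hab => h _ _ (by omega))]

lemma arBn_lin (θ : ℝ) (n : ℕ) : ∀ (s t : ℝ) (F G : ℕ → ℕ → ℝ),
    arBn θ n (fun a b => s * F a b + t * G a b) = s * arBn θ n F + t * arBn θ n G := by
  induction n with
  | zero => intro s t F G; rfl
  | succ n ih =>
    intro s t F G
    simp only [arBn]
    rw [ih s t (fun a b => F (a + 1) b), ih s t (fun a b => F a (b + 1))]
    ring

lemma arBn_mono (θ : ℝ) (h0 : 0 ≤ θ) (h1 : θ ≤ 1) (n : ℕ) : ∀ (F G : ℕ → ℕ → ℝ),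
    (∀ a b, a + b = n → F a b ≤ G a b) → arBn θ n F ≤ arBn θ n G := by
  induction n with
  | zero => intro F G h; exact h 0 0 rfl
  | succ n ih =>
    intro F G h
    simp only [arBn]
    have e1 := ih (fun a b => F (a + 1) b) (fun a b => G (a + 1) b)
      (fun a b hab => h _ _ (by omega))
    have e2 := ih (fun a b => F a (b + 1)) (fun a b => G a (b + 1))
      (fun a b hab => h _ _ (by omega))
    have : 0 ≤ 1 - θ := by linarith
    gcongr

lemma arBn_const (θ : ℝ) (n : ℕ) (c : ℝ) : arBn θ n (fun _ _ => c) = c := by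
  induction n with
  | zero => rfl
  | succ n ih => simp only [arBn]; rw [ih]; ring

lemma arBn_smul (θ : ℝ) (n : ℕ) (s : ℝ) (F : ℕ → ℕ → ℝ) :
    arBn θ n (fun a b => s * F a b) = s * arBn θ n F := by
  have := arBn_lin θ n s 0 F F
  simpa using this

lemma arBn_add (θ : ℝ) (n : ℕ) (F G : ℕ → ℕ → ℝ) :
    arBn θ n (fun a b => F a b + G a b) = arBn θ n F + arBn θ n G := by
  have := arBn_lin θ n 1 1 F G
  simpa using this

/-- Stein identity -/
lemma arBn_stein (θ : ℝ) (n : ℕ) : ∀ (H : ℕ → ℕ → ℝ),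
    arBn θ (n + 1) (fun a b => (b : ℝ) * H a (b - 1)) = (n + 1) * θ * arBn θ n H := by
  induction n with
  | zero => intro H; simp [arBn]
  | succ n ih =>
    intro H
    rw [arBn]
    rw [ih (fun a b => H (a + 1) b)]
    have e : arBn θ (n + 1) (fun a b => ((b + 1 : ℕ) : ℝ) * H a (b + 1 - 1))
        = arBn θ (n + 1) H + arBn θ (n + 1) (fun a b => (b : ℝ) * (fun a b => H a (b + 1)) a (b - 1)) := by
      rw [← arBn_add]
      apply arBn_congr
      intro a b _
      cases b with
      | zero => simp
      | succ b => simp; ring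
    rw [e, ih (fun a b => H a (b + 1))]
    simp only [arBn]
    push_cast
    ring

lemma arBn_stein_left (θ : ℝ) (n : ℕ) : ∀ (H : ℕ → ℕ → ℝ),
    arBn θ (n + 1) (fun a b => (a : ℝ) * H (a - 1) b) = (n + 1) * (1 - θ) * arBn θ n H := by
  induction n with
  | zero => intro H; simp [arBn]
  | succ n ih =>
    intro H
    rw [arBn]
    rw [ih (fun a b => H a (b + 1))]
    have e : arBn θ (n + 1) (fun a b => ((a + 1 : ℕ) : ℝ) * H (a + 1 - 1) b)
        = arBn θ (n + 1) H + arBn θ (n + 1) (fun a b => (a : ℝ) * (fun a b => H (a + 1) b) (a - 1) b) := by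
      rw [← arBn_add]
      apply arBn_congr
      intro a b _
      cases a with
      | zero => simp
      | succ b => simp; ring
    rw [e, ih (fun a b => H (a + 1) b)]
    simp only [arBn]
    push_cast
    ring

lemma arBn_sq (θ : ℝ) (n : ℕ) : ∀ c : ℝ,
    arBn θ n (fun a b => (c + θ * a - (1 - θ) * b) ^ 2) = c ^ 2 + n * (θ * (1 - θ)) := by
  induction n with
  | zero => intro c; simp [arBn]
  | succ n ih =>
    intro c
    simp only [arBn]
    have e1 := ih (c + θ)
    have e2 := ih (c - (1 - θ))
    have f1 : (fun a b : ℕ => (c + θ * ((a + 1 : ℕ) : ℝ) - (1 - θ) * b) ^ 2)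
      = (fun a b : ℕ => (c + θ + θ * (a : ℝ) - (1 - θ) * b) ^ 2) := by
      funext a b; push_cast; ring
    have f2 : (fun a b : ℕ => (c + θ * (a : ℝ) - (1 - θ) * ((b + 1 : ℕ) : ℝ)) ^ 2)
      = (fun a b : ℕ => (c - (1 - θ) + θ * (a : ℝ) - (1 - θ) * b) ^ 2) := by
      funext a b; push_cast; ring
    rw [f1, f2, e1, e2]
    push_cast
    ring

/-- the dominating error -/
noncomputable def arD (θ : ℝ) (a b : ℕ) : ℝ :=
  if a + b = 0 then 2 * θ * (1 - θ) else |θ * a - (1 - θ) * b| / ((a : ℝ) + b)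

lemma arD_succ (θ : ℝ) (n : ℕ) : arBn θ (n + 1) (arD θ)
    = arBn θ (n + 1) (fun a b => |θ * a - (1 - θ) * b|) / (n + 1) := by
  rw [div_eq_inv_mul, ← arBn_smul]
  apply arBn_congr
  intro a b hab
  have : (a : ℝ) + b = n + 1 := by exact_mod_cast hab
  rw [arD, if_neg (by omega), this, div_eq_inv_mul]

lemma arD_anti (θ : ℝ) (h0 : 0 ≤ θ) (h1 : θ ≤ 1) : Antitone (fun n => arBn θ n (arD θ)) := by
  apply antitone_nat_of_succ_le
  intro n
  cases n with
  | zero =>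
    simp only [arBn, arD]
    have : 0 ≤ 1 - θ := by linarith
    norm_num
    rw [abs_of_nonneg h0, abs_of_nonpos (by linarith)]
    apply le_of_eq; ring
  | succ n =>
    rw [arD_succ, arD_succ]
    set H : ℕ → ℕ → ℝ := fun a b => |θ * a - (1 - θ) * b| with hH
    have key : arBn θ (n + 1 + 1) (fun a b => ((n : ℝ) + 1) * H a b) ≤
        arBn θ (n + 1 + 1) (fun a b => (a : ℝ) * H (a - 1) b + (b : ℝ) * H a (b - 1)) := by
      apply arBn_mono θ h0 h1
      intro a b hab
      have hab' : (a : ℝ) + b = n + 1 + 1 := by exact_mod_cast hab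
      have ea : (a : ℝ) * H (a - 1) b = |a * (θ * (a - 1) - (1 - θ) * b)| := by
        rw [abs_mul, abs_of_nonneg (Nat.cast_nonneg a : (0 : ℝ) ≤ a)]
        cases a with
        | zero => simp
        | succ a => simp [hH]
      have eb : (b : ℝ) * H a (b - 1) = |b * (θ * a - (1 - θ) * (b - 1))| := by
        rw [abs_mul, abs_of_nonneg (Nat.cast_nonneg b : (0 : ℝ) ≤ b)]
        cases b with
        | zero => simp
        | succ b => simp [hH]
      rw [ea, eb]
      have en : ((n : ℝ) + 1) * H a b = |((n : ℝ) + 1) * (θ * a - (1 - θ) * b)| := by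
        rw [abs_mul, abs_of_nonneg (by positivity : (0 : ℝ) ≤ n + 1)]
      rw [en]
      refine le_trans (le_of_eq ?_) (abs_add_le _ _)
      congr 1
      have : (n : ℝ) + 1 = a + b - 1 := by linarith
      rw [this]; ring
    rw [arBn_smul, arBn_add, arBn_stein, arBn_stein_left] at key
    push_cast at key ⊢
    rw [div_le_div_iff₀ (by positivity) (by positivity)]
    linarith

lemma arD_sq (θ : ℝ) (h0 : 0 ≤ θ) (h1 : θ ≤ 1 / 2) (n : ℕ) :
    arBn θ n (fun a b => arD θ a b ^ 2) ≤ 2 * θ * (1 / ((n : ℝ) + 1)) := by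
  cases n with
  | zero =>
    simp only [arBn, arD]
    norm_num
    have : 0 ≤ θ * (1 - θ) := mul_nonneg h0 (by linarith)
    have h2 : θ * (1 - θ) ≤ 1 / 4 := by nlinarith [sq_nonneg (θ - 1 / 2)]
    have h3 : θ * (1 - θ) ≤ θ := by nlinarith
    nlinarith
  | succ n =>
    have e : arBn θ (n + 1) (fun a b => arD θ a b ^ 2)
        = arBn θ (n + 1) (fun a b => (0 + θ * a - (1 - θ) * b) ^ 2) / (n + 1) ^ 2 := by
      rw [div_eq_inv_mul, ← arBn_smul]
      apply arBn_congr
      intro a b hab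
      have : (a : ℝ) + b = n + 1 := by exact_mod_cast hab
      rw [arD, if_neg (by omega), this, div_pow, sq_abs, div_eq_inv_mul, zero_add]
    rw [e, arBn_sq]
    push_cast
    have hn : (0 : ℝ) ≤ n := Nat.cast_nonneg n
    rw [mul_one_div, div_le_div_iff₀ (by positivity) (by positivity)]
    have h3 : θ * (1 - θ) ≤ θ := by nlinarith
    have h4 : ((n : ℝ) + 1) * (n + 1 + 1) ≤ 2 * (n + 1) ^ 2 := by nlinarith
    calc (0 ^ 2 + ((n : ℝ) + 1) * (θ * (1 - θ))) * (n + 1 + 1)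
        = (θ * (1 - θ)) * (((n : ℝ) + 1) * (n + 1 + 1)) := by ring
      _ ≤ θ * (2 * (n + 1) ^ 2) := by
          apply mul_le_mul h3 h4 (by positivity) h0
      _ = _ := by ring

noncomputable def arL (q : ℝ) (n : ℕ) (f : ℕ → ℝ) : ℝ := arBn q n (fun _ b => f b)

lemma arL_inv (q : ℝ) (h0 : 0 ≤ q) (h1 : q ≤ 1) (n : ℕ) :
    ((n : ℝ) + 1) * q * arL q n (fun k => 1 / ((k : ℝ) + 1)) ≤ 1 := by
  rw [arL, ← arBn_stein]
  refine le_trans (arBn_mono q h0 h1 (n + 1) _ (fun _ _ => 1) ?_) (arBn_const q (n + 1) 1).le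
  intro a b _
  cases b with
  | zero => simp
  | succ b =>
    simp
    rw [mul_inv_cancel₀ (by positivity)]

lemma arL_lin (q : ℝ) (n : ℕ) (s t : ℝ) (f g : ℕ → ℝ) :
    arL q n (fun k => s * f k + t * g k) = s * arL q n f + t * arL q n g :=
  arBn_lin q n s t _ _

lemma arL_succ (q : ℝ) (n : ℕ) (f : ℕ → ℝ) :
    arL q (n + 1) f = (1 - q) * arL q n f + q * arL q n (fun k => f (k + 1)) := rfl

noncomputable def arK (q r : ℝ) : ℕ → (ℕ → ℝ) → (ℕ → ℝ) → ℝ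
  | 0, f, g => f 0 * g 0
  | n + 1, f, g => q * arK q r n (fun k => f (k + 1)) g + r * arK q r n f (fun k => g (k + 1))
      + (1 - q - r) * arK q r n f g

lemma arK_lin_left (q r : ℝ) (n : ℕ) : ∀ (s t : ℝ) (f f' g : ℕ → ℝ),
    arK q r n (fun k => s * f k + t * f' k) g = s * arK q r n f g + t * arK q r n f' g := by
  induction n with
  | zero => intro s t f f' g; simp only [arK]; ring
  | succ n ih =>
    intro s t f f' g
    simp only [arK]
    rw [ih s t f f', ih s t f f', ih s t (fun k => f (k + 1))]
    ring

lemma arK_lin_right (q r : ℝ) (n : ℕ) : ∀ (s t : ℝ) (f g g' : ℕ → ℝ),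
    arK q r n f (fun k => s * g k + t * g' k) = s * arK q r n f g + t * arK q r n f g' := by
  induction n with
  | zero => intro s t f f' g; simp only [arK]; ring
  | succ n ih =>
    intro s t f g g'
    simp only [arK]
    rw [ih s t _ g g', ih s t _ g g', ih s t f (fun k => g (k + 1))]
    ring

lemma arK_le (q r : ℝ) (hq : 0 ≤ q) (hr : 0 ≤ r) (hqr : q + r ≤ 1) (n : ℕ) :
    ∀ (f g : ℕ → ℝ), Antitone f → Antitone g → arK q r n f g ≤ arL q n f * arL r n g := by
  induction n with
  | zero => intro f g _ _; exact le_rfl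
  | succ n ih =>
    intro f g hf hg
    have hf' : Antitone (fun k => f (k + 1)) := fun a b h => hf (by omega)
    have hg' : Antitone (fun k => g (k + 1)) := fun a b h => hg (by omega)
    have e1 := mul_le_mul_of_nonneg_left (ih _ g hf' hg) hq
    have e2 := mul_le_mul_of_nonneg_left (ih f _ hf hg') hr
    have e3 := mul_le_mul_of_nonneg_left (ih f g hf hg) (by linarith : 0 ≤ 1 - q - r)
    have m1 : arL q n (fun k => f (k + 1)) ≤ arL q n f :=
      arBn_mono q hq (by linarith) n _ _ (fun a b _ => hf (by omega))
    have m2 : arL r n (fun k => g (k + 1)) ≤ arL r n g :=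
      arBn_mono r hr (by linarith) n _ _ (fun a b _ => hg (by omega))
    simp only [arK]
    rw [arL_succ, arL_succ]
    have := mul_nonneg (mul_nonneg hq hr) (mul_nonneg (sub_nonneg.2 m1) (sub_nonneg.2 m2))
    linarith

set_option linter.unusedSectionVars false
set_option linter.unusedSimpArgs false

section expec
variable {α : Type*} [Fintype α] [DecidableEq α]

def arC {N : ℕ} (ω : Fin N → α) (a : α) : ℕ := (Finset.univ.filter fun i => ω i = a).card

noncomputable def arE (w : α → ℝ) (N : ℕ) (Φ : (α → ℕ) → ℝ) : ℝ :=
  ∑ ω : Fin N → α, (∏ i, w (ω i)) * Φ (arC ω)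

lemma arC_cons {N : ℕ} (a : α) (ω : Fin N → α) :
    arC (Fin.cons a ω : Fin (N + 1) → α) = fun b => arC ω b + if a = b then 1 else 0 := by
  funext b
  simp only [arC]
  rw [Fin.card_filter_univ_succ]
  simp only [Fin.cons_zero, Fin.cons_succ, Function.comp_def]
  split_ifs <;> simp

lemma arE_succ (w : α → ℝ) (N : ℕ) (Φ : (α → ℕ) → ℝ) :
    arE w (N + 1) Φ = ∑ a, w a * arE w N (fun c => Φ (fun b => c b + if a = b then 1 else 0)) := by
  simp only [arE]
  rw [← (Fin.consEquiv (fun _ : Fin (N + 1) => α)).sum_comp, Fintype.sum_prod_type]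
  refine Finset.sum_congr rfl fun a _ => ?_
  rw [Finset.mul_sum]
  refine Finset.sum_congr rfl fun ω _ => ?_
  have h : (Fin.consEquiv (fun _ : Fin (N + 1) => α)) (a, ω) = (Fin.cons a ω : Fin (N + 1) → α) := rfl
  rw [h, arC_cons, Fin.prod_univ_succ]
  simp only [Fin.cons_zero, Fin.cons_succ]
  ring

lemma arE_zero (w : α → ℝ) (Φ : (α → ℕ) → ℝ) : arE w 0 Φ = Φ (fun _ => 0) := by
  simp [arE]
  congr 1
  

end expec

section model
variable {ι : Type*} [Fintype ι] [DecidableEq ι]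

lemma arE_single (w : ι × Bool → ℝ) (q θ : ι → ℝ) (ht : ∀ x, w (x, true) = q x * (1 - θ x))
    (hf : ∀ x, w (x, false) = q x * θ x) (hq : ∑ x, q x = 1) (x : ι) (N : ℕ) :
    ∀ F : ℕ → ℕ → ℝ, arE w N (fun c => F (c (x, true)) (c (x, false)))
      = arL (q x) N (fun n => arBn (θ x) n F) := by
  induction N with
  | zero => intro F; rw [arE_zero]; rfl
  | succ N ih =>
    intro F
    rw [arE_succ, Fintype.sum_prod_type]
    simp only [Fintype.sum_bool]
    rw [← Finset.add_sum_erase _ _ (Finset.mem_univ x)]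
    have hrest : ∀ i ∈ Finset.univ.erase x,
        (w (i, true) * arE w N (fun c =>
            F (c (x, true) + if (i, true) = (x, true) then 1 else 0)
              (c (x, false) + if (i, true) = (x, false) then 1 else 0))
          + w (i, false) * arE w N (fun c =>
            F (c (x, true) + if (i, false) = (x, true) then 1 else 0)
              (c (x, false) + if (i, false) = (x, false) then 1 else 0)))
        = q i * arL (q x) N (fun n => arBn (θ x) n F) := by
      intro i hi
      have hne : i ≠ x := Finset.ne_of_mem_erase hi
      simp only [Prod.mk.injEq, hne, false_and, if_false, add_zero]
      rw [ih F, ht, hf]; ring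
    rw [Finset.sum_congr rfl hrest, ← Finset.sum_mul]
    have hs : ∑ i ∈ Finset.univ.erase x, q i = 1 - q x := by
      rw [← hq, ← Finset.add_sum_erase _ _ (Finset.mem_univ x)]; ring
    rw [hs]
    simp only [Prod.mk.injEq, true_and, if_true, reduceCtorEq, and_false, if_false, add_zero]
    rw [ih (fun a b => F (a + 1) b), ih (fun a b => F a (b + 1)), arL_succ]
    simp only [arBn]
    rw [arL_lin, ht, hf]
    ring

lemma arE_pair (w : ι × Bool → ℝ) (q θ : ι → ℝ) (ht : ∀ x, w (x, true) = q x * (1 - θ x))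
    (hf : ∀ x, w (x, false) = q x * θ x) (hq : ∑ x, q x = 1) (x y : ι) (hxy : x ≠ y) (N : ℕ) :
    ∀ F G : ℕ → ℕ → ℝ, arE w N (fun c => F (c (x, true)) (c (x, false)) *
        G (c (y, true)) (c (y, false)))
      = arK (q x) (q y) N (fun n => arBn (θ x) n F) (fun n => arBn (θ y) n G) := by
  induction N with
  | zero => intro F G; rw [arE_zero]; rfl
  | succ N ih =>
    intro F G
    have hyx := hxy.symm
    have hy : y ∈ Finset.univ.erase x := Finset.mem_erase.2 ⟨hyx, Finset.mem_univ _⟩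
    rw [arE_succ, Fintype.sum_prod_type]
    simp only [Fintype.sum_bool]
    rw [← Finset.add_sum_erase _ _ (Finset.mem_univ x), ← Finset.add_sum_erase _ _ hy]
    have hrest : ∀ i ∈ (Finset.univ.erase x).erase y,
        (w (i, true) * arE w N (fun c =>
            F (c (x, true) + if (i, true) = (x, true) then 1 else 0)
              (c (x, false) + if (i, true) = (x, false) then 1 else 0) *
            G (c (y, true) + if (i, true) = (y, true) then 1 else 0)
              (c (y, false) + if (i, true) = (y, false) then 1 else 0))
          + w (i, false) * arE w N (fun c =>
            F (c (x, true) + if (i, false) = (x, true) then 1 else 0)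
              (c (x, false) + if (i, false) = (x, false) then 1 else 0) *
            G (c (y, true) + if (i, false) = (y, true) then 1 else 0)
              (c (y, false) + if (i, false) = (y, false) then 1 else 0)))
        = q i * arK (q x) (q y) N (fun n => arBn (θ x) n F) (fun n => arBn (θ y) n G) := by
      intro i hi
      have hne : i ≠ y := Finset.ne_of_mem_erase hi
      have hne' : i ≠ x := Finset.ne_of_mem_erase (Finset.mem_of_mem_erase hi)
      simp only [Prod.mk.injEq, hne, hne', false_and, if_false, add_zero]
      rw [ih F, ht, hf]; ring
    rw [Finset.sum_congr rfl hrest, ← Finset.sum_mul]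
    have hs : ∑ i ∈ (Finset.univ.erase x).erase y, q i = 1 - q x - q y := by
      rw [← hq, ← Finset.add_sum_erase _ _ (Finset.mem_univ x), ← Finset.add_sum_erase _ _ hy]; ring
    rw [hs]
    simp only [Prod.mk.injEq, true_and, if_true, reduceCtorEq, and_false, if_false, add_zero,
      hxy, hyx, false_and]
    rw [ih (fun a b => F (a + 1) b), ih (fun a b => F a (b + 1)), ih F (fun a b => G (a + 1) b),
      ih F (fun a b => G a (b + 1)), arK]
    simp only [arBn]
    rw [arK_lin_left, arK_lin_right, ht, hf, ht, hf]
    ring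

end model

lemma ar_cheb {Ω ι : Type*} [Fintype Ω] [Fintype ι] [DecidableEq ι] (W : Ω → ℝ)
    (hW : ∀ o, 0 ≤ W o) (hW1 : ∑ o, W o = 1) (X : ι → Ω → ℝ) (v : ι → ℝ)
    (h1 : ∀ x, ∑ o, W o * (X x o) ^ 2 ≤ v x)
    (h2 : ∀ x y, x ≠ y → ∑ o, W o * (X x o * X y o) ≤ (∑ o, W o * X x o) * (∑ o, W o * X y o))
    (T δ : ℝ) (hT : ∑ x, √(v x) < T) (hδ : ∑ x, v x ≤ δ * (T - ∑ x, √(v x)) ^ 2) :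
    ∑ o with T < ∑ x, X x o, W o ≤ δ := by
  classical
  set m : ι → ℝ := fun x => ∑ o, W o * X x o with hm
  have hv0 : ∀ x, 0 ≤ v x := fun x =>
    le_trans (Finset.sum_nonneg fun o _ => mul_nonneg (hW o) (sq_nonneg _)) (h1 x)
  have hmsq : ∀ x, m x ^ 2 ≤ v x := by
    intro x
    have h := Finset.sum_nonneg (s := Finset.univ)
      fun o _ => mul_nonneg (hW o) (sq_nonneg (X x o - m x))
    have e : ∑ o, W o * (X x o - m x) ^ 2 = ∑ o, W o * X x o ^ 2 - m x ^ 2 := by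
      have : ∀ o, W o * (X x o - m x) ^ 2
          = W o * X x o ^ 2 - 2 * m x * (W o * X x o) + m x ^ 2 * W o := by intro o; ring
      simp only [this]
      rw [Finset.sum_add_distrib, Finset.sum_sub_distrib, ← Finset.mul_sum, ← Finset.mul_sum, hW1]
      change _ - 2 * m x * m x + _ = _
      ring
    rw [e] at h
    linarith [h1 x]
  have hms : ∀ x, m x ≤ √(v x) := fun x => Real.le_sqrt_of_sq_le (hmsq x)
  set Z : Ω → ℝ := fun o => ∑ x, X x o with hZ
  set M : ℝ := ∑ x, m x with hM
  have hMle : M ≤ ∑ x, √(v x) := Finset.sum_le_sum fun x _ => hms x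
  have hEZ : ∑ o, W o * Z o = M := by
    simp only [hZ, hM, hm, Finset.mul_sum]
    rw [Finset.sum_comm]
  have hEZ2 : ∑ o, W o * Z o ^ 2 ≤ M ^ 2 + ∑ x, v x := by
    have e : ∑ o, W o * Z o ^ 2 = ∑ x, ∑ y, ∑ o, W o * (X x o * X y o) := by
      have h : ∀ o, W o * Z o ^ 2 = ∑ x, ∑ y, W o * (X x o * X y o) := by
        intro o
        rw [hZ, sq, Finset.sum_mul_sum, Finset.mul_sum]
        exact Finset.sum_congr rfl fun x _ => Finset.mul_sum _ _ _
      rw [Finset.sum_congr rfl fun o _ => h o, Finset.sum_comm]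
      exact Finset.sum_congr rfl fun x _ => Finset.sum_comm
    have e2 : M ^ 2 + ∑ x, v x = ∑ x, ∑ y, (m x * m y + if x = y then v x else 0) := by
      simp only [Finset.sum_add_distrib, Finset.sum_ite_eq, Finset.mem_univ, if_true]
      rw [sq, hM, Finset.sum_mul_sum]
    rw [e, e2]
    refine Finset.sum_le_sum fun x _ => Finset.sum_le_sum fun y _ => ?_
    by_cases hxy : x = y
    · subst hxy
      have := h1 x
      simp only [sq] at this
      simp only [if_true]
      linarith [mul_self_nonneg (m x)]
    · rw [if_neg hxy, add_zero]
      exact h2 x y hxy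
  have hvar : ∑ o, W o * (Z o - M) ^ 2 ≤ ∑ x, v x := by
    have : ∀ o, W o * (Z o - M) ^ 2
        = W o * Z o ^ 2 - 2 * M * (W o * Z o) + M ^ 2 * W o := by intro o; ring
    simp only [this]
    rw [Finset.sum_add_distrib, Finset.sum_sub_distrib, ← Finset.mul_sum, ← Finset.mul_sum, hW1, hEZ]
    linarith
  set t := T - ∑ x, √(v x) with ht
  have ht0 : 0 < t := sub_pos.2 hT
  have hk : (∑ o with T < ∑ x, X x o, W o) * t ^ 2 ≤ ∑ o, W o * (Z o - M) ^ 2 := by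
    rw [Finset.sum_mul]
    refine le_trans (Finset.sum_le_sum ?_) (Finset.sum_le_sum_of_subset_of_nonneg
      (Finset.filter_subset _ Finset.univ) fun o _ _ => mul_nonneg (hW o) (sq_nonneg _))
    intro o ho
    have ho' : T < Z o := (Finset.mem_filter.1 ho).2
    have : t ≤ Z o - M := by linarith
    have := hW o
    gcongr
  have := hk.trans (hvar.trans hδ)
  exact le_of_mul_le_mul_right this (by positivity)

/-- Theorem 2, estimation stage, Rényi-entropy form: if the number of samples
satisfies `N ≥ 8c₋γ((1+ε)/ε)²(∑_x √(p⁻ₓ) + δ₁^{−1/2})²` (note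
`∑_x √(p⁻ₓ) = 2^{H_{1/2}(p⁻)/2}`), then with probability at least `1 − δ₁` the
estimated acceptance ratios `R` (built from the counts `N⁺ₓ, N⁻ₓ` of the `N`
i.i.d. samples) satisfy `γ·∑_x |μₓ − Rₓ|·qₓ ≤ ε/(1+ε)`, where `μₓ = pₓ/(γqₓ)` is
the ideal acceptance ratio. -/
theorem acceptance_ratio_estimation_cost_renyi_bound
    {ι : Type*} [Fintype ι] [DecidableEq ι] [MeasurableSpace ι]
    (pp pm : ι → ℝ)
    (hpp0 : ∀ x, 0 ≤ pp x) (hpp1 : ∑ x, pp x = 1)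
    (hpm0 : ∀ x, 0 ≤ pm x) (hpm1 : ∑ x, pm x = 1)
    (cp cm : ℝ) (hcp : 0 ≤ cp) (hcm : 0 ≤ cm) (hc : cp - cm = 1)
    (γ : ℝ) (hγ : γ = cp + cm)
    (p : ι → ℝ) (hp : ∀ x, p x = cp * pp x - cm * pm x)
    (hp0 : ∀ x, 0 ≤ p x)
    (q : ι → ℝ) (hq : ∀ x, q x = (cp * pp x + cm * pm x) / γ)
    (μ1 : Measure (ι × Bool)) [IsProbabilityMeasure μ1]
    (hμt : ∀ x, μ1 {(x, true)} = ENNReal.ofReal (cp * pp x / γ))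
    (hμf : ∀ x, μ1 {(x, false)} = ENNReal.ofReal (cm * pm x / γ))
    (N : ℕ) (hN : 0 < N)
    (R : ι → (Fin N → ι × Bool) → ℝ)
    (hR : ∀ x ω, R x ω =
      if ((Finset.univ.filter fun i => ω i = (x, true)).card
           + (Finset.univ.filter fun i => ω i = (x, false)).card) = 0
      then 1
      else max 0
        ((((Finset.univ.filter fun i => ω i = (x, true)).card : ℝ)
            - ((Finset.univ.filter fun i => ω i = (x, false)).card : ℝ))
          / (((Finset.univ.filter fun i => ω i = (x, true)).card : ℝ)
            + ((Finset.univ.filter fun i => ω i = (x, false)).card : ℝ))))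
    (μid : ι → ℝ) (hμid : ∀ x, μid x = if q x = 0 then 0 else p x / (γ * q x))
    (ε δ₁ : ℝ) (hε : 0 < ε) (hδ₁0 : 0 < δ₁) (hδ₁1 : δ₁ < 1)
    (hNbound : (N : ℝ) ≥ 8 * cm * γ * ((1 + ε) / ε) ^ 2 *
      (∑ x, Real.sqrt (pm x) + δ₁ ^ (-(1 : ℝ) / 2)) ^ 2) :
    ENNReal.ofReal (1 - δ₁) ≤
      (Measure.pi fun _ : Fin N => μ1)
        {ω | γ * ∑ x, |μid x - R x ω| * q x ≤ ε / (1 + ε)} := by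
  have hγ1 : 1 ≤ γ := by linarith
  have hγ0 : 0 < γ := by linarith
  have hNR : (0 : ℝ) < N := by exact_mod_cast hN
  obtain ⟨w, hw⟩ : ∃ w : ι × Bool → ℝ, w = fun a =>
    if a.2 then cp * pp a.1 / γ else cm * pm a.1 / γ := ⟨_, rfl⟩
  have hwt : ∀ x, w (x, true) = cp * pp x / γ := by intro x; simp [hw]
  have hwf : ∀ x, w (x, false) = cm * pm x / γ := by intro x; simp [hw]
  have ha0 : ∀ x, 0 ≤ cp * pp x := fun x => mul_nonneg hcp (hpp0 x)
  have hb0 : ∀ x, 0 ≤ cm * pm x := fun x => mul_nonneg hcm (hpm0 x)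
  have hw0 : ∀ a, 0 ≤ w a := by
    rintro ⟨x, b⟩
    cases b
    · rw [hwf]; exact div_nonneg (hb0 x) hγ0.le
    · rw [hwt]; exact div_nonneg (ha0 x) hγ0.le
  have hμw : ∀ a, μ1 {a} = ENNReal.ofReal (w a) := by
    rintro ⟨x, b⟩
    cases b
    · rw [hwf, hμf]
    · rw [hwt, hμt]
  have hq0 : ∀ x, 0 ≤ q x := fun x => by
    rw [hq]; exact div_nonneg (add_nonneg (ha0 x) (hb0 x)) hγ0.le
  have hq1 : ∑ x, q x = 1 := by
    simp only [hq]
    rw [← Finset.sum_div, Finset.sum_add_distrib, ← Finset.mul_sum, ← Finset.mul_sum, hpp1, hpm1,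
      mul_one, mul_one, ← hγ, div_self hγ0.ne']
  obtain ⟨θ, hθ⟩ : ∃ θ : ι → ℝ, ∀ x, θ x = w (x, false) / q x := ⟨_, fun _ => rfl⟩
  have hqw : ∀ x, q x = w (x, true) + w (x, false) := fun x => by
    rw [hq, hwt, hwf]; ring
  have hf : ∀ x, w (x, false) = q x * θ x := by
    intro x
    by_cases h : q x = 0
    · have := hqw x
      rw [h, zero_mul]
      linarith [hw0 (x, true), hw0 (x, false)]
    · rw [hθ]; field_simp
  have ht : ∀ x, w (x, true) = q x * (1 - θ x) := by
    intro x
    linarith [hf x, hqw x]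
  have hθ0 : ∀ x, 0 ≤ θ x := fun x => by rw [hθ]; exact div_nonneg (hw0 _) (hq0 x)
  have hθ1 : ∀ x, θ x ≤ 1 / 2 := by
    intro x
    rw [hθ]
    apply div_le_of_le_mul₀ (hq0 x) (by norm_num)
    have : w (x, false) ≤ w (x, true) := by
      rw [hwt, hwf]
      have := hp0 x
      rw [hp] at this
      exact div_le_div_of_nonneg_right (by linarith) hγ0.le
    rw [hqw]; linarith
  have hqle : ∀ x y, x ≠ y → q x + q y ≤ 1 := by
    intro x y hxy
    rw [← hq1, ← Finset.sum_pair hxy]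
    exact Finset.sum_le_sum_of_subset_of_nonneg (Finset.subset_univ _) fun _ _ _ => hq0 _
  have hqle1 : ∀ x, q x ≤ 1 := by
    intro x
    rw [← hq1]
    exact Finset.single_le_sum (fun i _ => hq0 i) (Finset.mem_univ x)
  have hwsum : ∑ a, w a = 1 := by
    rw [Fintype.sum_prod_type]
    simp only [Fintype.sum_bool]
    rw [← hq1]
    exact Finset.sum_congr rfl fun x _ => (hqw x).symm
  obtain ⟨X, hX⟩ : ∃ X : ι → (Fin N → ι × Bool) → ℝ, ∀ x ω, X x ω =
    2 * γ * q x * arD (θ x) (arC ω (x, true)) (arC ω (x, false)) := ⟨_, fun _ _ => rfl⟩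
  obtain ⟨W, hWd⟩ : ∃ W : (Fin N → ι × Bool) → ℝ, ∀ ω, W ω = ∏ i, w (ω i) := ⟨_, fun _ => rfl⟩
  have hW0 : ∀ ω, 0 ≤ W ω := fun ω => by
    rw [hWd]; exact Finset.prod_nonneg fun i _ => hw0 _
  have hW1 : ∑ ω, W ω = 1 := by
    simp only [hWd]
    have := (Finset.prod_univ_sum (fun _ : Fin N => (Finset.univ : Finset (ι × Bool)))
      (fun _ a => w a))
    rw [Fintype.piFinset_univ] at this
    rw [← this]
    simp [hwsum]
  obtain ⟨s2, hs2⟩ : ∃ s2 : ℝ, s2 = 8 * cm * γ / N := ⟨_, rfl⟩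
  have hs20 : 0 ≤ s2 := by rw [hs2]; positivity
  have hsv : ∀ x, √(s2 * pm x) = √s2 * √(pm x) := fun x => Real.sqrt_mul hs20 _
  have hsumv : ∑ x, s2 * pm x = s2 := by rw [← Finset.mul_sum, hpm1, mul_one]
  have hsums : ∑ x, √(s2 * pm x) = √s2 * ∑ x, √(pm x) := by
    simp only [hsv]; rw [Finset.mul_sum]
  obtain ⟨T, hT⟩ : ∃ T : ℝ, T = ε / (1 + ε) := ⟨_, rfl⟩
  have hT0 : 0 < T := by rw [hT]; positivity
  obtain ⟨d, hd⟩ : ∃ d : ℝ, d = δ₁ ^ (-(1 : ℝ) / 2) := ⟨_, rfl⟩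
  have hd0 : 0 < d := by rw [hd]; positivity
  have hd2 : δ₁ * d ^ 2 = 1 := by
    rw [hd, ← Real.rpow_natCast, ← Real.rpow_mul hδ₁0.le]
    norm_num
    rw [Real.rpow_neg_one, mul_inv_cancel₀ hδ₁0.ne']
  have hM0 : 0 ≤ ∑ x, √(pm x) := Finset.sum_nonneg fun _ _ => Real.sqrt_nonneg _
  have hTge : √s2 * (∑ x, √(pm x) + d) ≤ T := by
    refine (sq_le_sq₀ (by positivity) hT0.le).1 ?_
    rw [mul_pow, Real.sq_sqrt hs20, hs2]
    rw [← hd] at hNbound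
    have e : ((1 + ε) / ε) ^ 2 = (T ^ 2)⁻¹ := by
      rw [hT, ← inv_pow, inv_div]
    rw [e] at hNbound
    have hT2 : 0 < T ^ 2 := by positivity
    rw [div_mul_eq_mul_div, div_le_iff₀ hNR]
    have := mul_le_mul_of_nonneg_left hNbound hT2.le
    calc _ = T ^ 2 * (8 * cm * γ * (T ^ 2)⁻¹ * (∑ x, √(pm x) + d) ^ 2) := by
          field_simp
      _ ≤ _ := this
  have hss := Real.sqrt_nonneg s2
  have hcheb := ar_cheb W hW0 hW1 X (fun x => s2 * pm x) ?_ ?_ T δ₁ ?_ ?_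
  rotate_left
  · intro x
    have e : ∑ ω, W ω * X x ω ^ 2 = (2 * γ * q x) ^ 2 *
        arE w N (fun c => (fun a b => arD (θ x) a b ^ 2) (c (x, true)) (c (x, false))) := by
      rw [arE, Finset.mul_sum]
      refine Finset.sum_congr rfl fun ω _ => ?_
      rw [hX, hWd]; ring
    rw [e, arE_single w q θ ht hf hq1 x N (fun a b => arD (θ x) a b ^ 2)]
    have h1 : arL (q x) N (fun n => arBn (θ x) n (fun a b => arD (θ x) a b ^ 2))
        ≤ 2 * θ x * arL (q x) N (fun k => 1 / ((k : ℝ) + 1)) := by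
      unfold arL
      rw [← arBn_smul]
      apply arBn_mono _ (hq0 x) (hqle1 x)
      intro a b _
      exact arD_sq _ (hθ0 x) (hθ1 x) b
    have h2 := arL_inv (q x) (hq0 x) (hqle1 x) N
    have hLnn : 0 ≤ arL (q x) N (fun k => 1 / ((k : ℝ) + 1)) := by
      rw [← arBn_const (q x) N 0]
      apply arBn_mono _ (hq0 x) (hqle1 x)
      intro a b _
      positivity
    set Lv := arL (q x) N (fun k => 1 / ((k : ℝ) + 1)) with hLv
    have h3 : q x * Lv ≤ 1 / N := by
      rw [le_div_iff₀ hNR]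
      nlinarith [mul_nonneg (hq0 x) hLnn]
    have hpmx : q x * θ x = cm * pm x / γ := by rw [← hf, hwf]
    calc _ ≤ (2 * γ * q x) ^ 2 * (2 * θ x * Lv) := by gcongr
      _ = 8 * γ ^ 2 * (q x * θ x) * (q x * Lv) := by ring
      _ ≤ 8 * γ ^ 2 * (q x * θ x) * (1 / N) := by
          have := mul_nonneg (hq0 x) (hθ0 x)
          gcongr
      _ = s2 * pm x := by rw [hpmx, hs2]; field_simp
  · intro x y hxy
    have e : ∑ ω, W ω * (X x ω * X y ω) = (2 * γ * q x) * (2 * γ * q y) *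
        arE w N (fun c => arD (θ x) (c (x, true)) (c (x, false)) *
          arD (θ y) (c (y, true)) (c (y, false))) := by
      rw [arE, Finset.mul_sum]
      refine Finset.sum_congr rfl fun ω _ => ?_
      rw [hX, hX, hWd]; ring
    have e1 : ∀ x, ∑ ω, W ω * X x ω = (2 * γ * q x) *
        arE w N (fun c => arD (θ x) (c (x, true)) (c (x, false))) := by
      intro x
      rw [arE, Finset.mul_sum]
      refine Finset.sum_congr rfl fun ω _ => ?_
      rw [hX, hWd]; ring
    rw [e, e1, e1, arE_pair w q θ ht hf hq1 x y hxy, arE_single w q θ ht hf hq1,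
      arE_single w q θ ht hf hq1]
    have := arK_le (q x) (q y) (hq0 x) (hq0 y) (hqle x y hxy) N _ _
      (arD_anti (θ x) (hθ0 x) (by linarith [hθ1 x])) (arD_anti (θ y) (hθ0 y) (by linarith [hθ1 y]))
    have hc0 : 0 ≤ (2 * γ * q x) * (2 * γ * q y) := by
      have := hq0 x
      have := hq0 y
      positivity
    have := mul_le_mul_of_nonneg_left this hc0
    linarith
  · rw [hsums]
    rcases hss.eq_or_lt with h | h
    · rw [← h, zero_mul]; exact hT0
    · have := mul_pos h hd0
      linarith
  · rw [hsums, hsumv]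
    have h1 : √s2 * d ≤ T - √s2 * ∑ x, √(pm x) := by linarith
    have h2 : (√s2 * d) ^ 2 ≤ (T - √s2 * ∑ x, √(pm x)) ^ 2 := by
      have := mul_nonneg hss hd0.le
      gcongr
    calc s2 = δ₁ * (√s2 * d) ^ 2 := by
          rw [mul_pow, Real.sq_sqrt hs20]; linear_combination (-s2) * hd2
      _ ≤ _ := by gcongr
  -- domination
  have hdom : ∀ ω, γ * ∑ x, |μid x - R x ω| * q x ≤ ∑ x, X x ω := by
    intro ω
    rw [Finset.mul_sum]
    refine Finset.sum_le_sum fun x _ => ?_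
    rw [hX]
    have key : q x ≠ 0 → |μid x - R x ω| ≤
        2 * arD (θ x) (arC ω (x, true)) (arC ω (x, false)) := by
      intro hqx
      have hid : μid x = 1 - 2 * θ x := by
        rw [hμid, if_neg hqx, hθ, hwf, hp, hq]
        have : cp * pp x + cm * pm x ≠ 0 := by
          intro h; apply hqx; rw [hq, h, zero_div]
        field_simp
        ring
      have hid0 : 0 ≤ μid x := by rw [hid]; linarith [hθ1 x]
      rw [hR]
      change |μid x - if arC ω (x, true) + arC ω (x, false) = 0 then 1 else
        max 0 (((arC ω (x, true) : ℝ) - (arC ω (x, false) : ℝ)) /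
          ((arC ω (x, true) : ℝ) + (arC ω (x, false) : ℝ)))| ≤ _
      generalize arC ω (x, true) = a
      generalize arC ω (x, false) = b
      rw [arD]
      have h0 := hθ0 x
      have h1 := hθ1 x
      split_ifs with h
      · rw [hid, abs_le]
        constructor <;> nlinarith
      · have hab : (0 : ℝ) < a + b := by exact_mod_cast Nat.pos_of_ne_zero h
        have e : |μid x - ((a : ℝ) - b) / (a + b)| = 2 * (|θ x * a - (1 - θ x) * b| / (a + b)) := by
          have e0 : μid x - ((a : ℝ) - b) / (a + b)
              = -(2 * ((θ x * a - (1 - θ x) * b) / (a + b))) := by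
            rw [hid]
            field_simp
            ring
          rw [e0, abs_neg, abs_mul, abs_div, abs_of_pos hab, abs_two]
        rw [← e]
        have := abs_max_sub_max_le_abs (μid x) (((a : ℝ) - b) / (a + b)) 0
        rw [max_eq_left hid0, max_comm _ (0 : ℝ)] at this
        exact this
    by_cases hqx : q x = 0
    · rw [hqx]; simp
    · have := mul_le_mul_of_nonneg_left (key hqx) (mul_nonneg hγ0.le (hq0 x))
      linarith
  -- measure
  set P := Measure.pi fun _ : Fin N => μ1 with hP
  set S := {ω : Fin N → ι × Bool | γ * ∑ x, |μid x - R x ω| * q x ≤ ε / (1 + ε)} with hS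
  have hbad : P Sᶜ ≤ ENNReal.ofReal δ₁ := by
    have hsub : Sᶜ ⊆ ⋃ ω ∈ (Finset.univ.filter fun ω => T < ∑ x, X x ω), {ω} := by
      intro ω hω
      have : T < γ * ∑ x, |μid x - R x ω| * q x := by
        rw [hT]; exact not_le.1 hω
      simp only [Set.mem_iUnion, Finset.mem_filter, Finset.mem_univ, true_and,
        Set.mem_singleton_iff]
      exact ⟨ω, lt_of_lt_of_le this (hdom ω), rfl⟩
    have hsing : ∀ ω, P {ω} = ENNReal.ofReal (W ω) := by
      intro ω
      rw [hP, ← Set.univ_pi_singleton, Measure.pi_pi, hWd,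
        ENNReal.ofReal_prod_of_nonneg (fun i _ => hw0 _)]
      exact Finset.prod_congr rfl fun i _ => hμw _
    calc P Sᶜ ≤ P (⋃ ω ∈ (Finset.univ.filter fun ω => T < ∑ x, X x ω), {ω}) := measure_mono hsub
      _ ≤ ∑ ω with T < ∑ x, X x ω, P {ω} := measure_biUnion_finset_le _ _
      _ = ENNReal.ofReal (∑ ω with T < ∑ x, X x ω, W ω) := by
          rw [ENNReal.ofReal_sum_of_nonneg (fun ω _ => hW0 ω)]
          exact Finset.sum_congr rfl fun ω _ => hsing ω
      _ ≤ _ := ENNReal.ofReal_le_ofReal hcheb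
  have htot : 1 ≤ P S + P Sᶜ := by
    rw [← measure_univ (μ := P), ← Set.union_compl_self S]
    exact measure_union_le _ _
  rw [ENNReal.ofReal_sub _ hδ₁0.le, ENNReal.ofReal_one]
  rw [tsub_le_iff_right]
  exact htot.trans (by gcongr)
end

section
/- Let v = 1 − e^{−1/2}. For ε > 0 and δ₁ ∈ (0,1), if the number of samples N satisfies N ≥ 2·γ²·((1+ε)/ε)²·( ∑_x √(q_x) + √((2/v)·log(1/δ₁)) )², then with probability at least 1 − δ₁ the estimated acceptance ratios satisfy Δ := γ·∑_x |μ_x − R_x|·q_x ≤ ε/(1+ε). (Theorem S3, estimation stage: alternative bound with logarithmic dependence on the failure probability.) -/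
open MeasureTheory Finset

/-- expectation under the product weights -/
noncomputable def exW {α : Type*} [Fintype α] {n : ℕ} (w : α → ℝ) (f : (Fin n → α) → ℝ) : ℝ :=
  ∑ ω : Fin n → α, (∏ i, w (ω i)) * f ω

lemma hoeff_fin {α : Type*} [Fintype α] (w : α → ℝ) (hw : ∀ a, 0 ≤ w a) (hs : ∑ a, w a = 1)
    (g : α → ℝ) (c : ℝ) (hg : ∀ a b, g a - g b ≤ c) (t : ℝ) :
    ∑ a, w a * Real.exp (t * g a) ≤ Real.exp (t * ∑ a, w a * g a + c ^ 2 * t ^ 2 / 8) := by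
  let _ : MeasurableSpace α := ⊤
  have hne : Nonempty α := by
    by_contra h
    rw [not_nonempty_iff] at h
    simp at hs
  obtain ⟨a0, ha0⟩ := Finite.exists_min g
  have hc : 0 ≤ c := by simpa using hg a0 a0
  let P : PMF α := PMF.ofFintype (fun a => ENNReal.ofReal (w a)) (by
    rw [← ENNReal.ofReal_sum_of_nonneg (fun a _ => hw a), hs]; simp)
  have hP : ∀ a, (P a).toReal = w a := fun a => by
    simp [P, hw a]
  have hint : ∀ f : α → ℝ, ∫ a, f a ∂P.toMeasure = ∑ a, w a * f a := fun f => by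
    rw [PMF.integral_eq_sum]; simp [hP]
  have h := (ProbabilityTheory.hasSubgaussianMGF_of_mem_Icc (μ := P.toMeasure) (X := g)
    (a := g a0) (b := g a0 + c) (measurable_of_finite g).aemeasurable
    (Filter.Eventually.of_forall fun a => ⟨ha0 a, by linarith [hg a a0]⟩)).mgf_le t
  rw [ProbabilityTheory.mgf, hint, hint] at h
  have e : ∑ a, w a * Real.exp (t * g a) = Real.exp (t * ∑ a, w a * g a) *
      ∑ a, w a * Real.exp (t * (g a - ∑ a, w a * g a)) := by
    rw [mul_sum]
    refine sum_congr rfl fun a _ => ?_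
    rw [mul_left_comm, ← Real.exp_add]; congr 2; ring
  rw [e, Real.exp_add]
  refine mul_le_mul_of_nonneg_left (h.trans (le_of_eq ?_)) (Real.exp_pos _).le
  congr 1
  simp [abs_of_nonneg hc]
  ring

lemma exW_succ {α : Type*} [Fintype α] {n : ℕ} (w : α → ℝ) (f : (Fin (n+1) → α) → ℝ) :
    exW w f = exW w (fun ω : Fin n → α => ∑ a, w a * f (Fin.cons a ω : Fin (n+1) → α)) := by
  unfold exW
  rw [← (Fin.consEquiv (fun _ : Fin (n+1) => α)).sum_comp, Fintype.sum_prod_type, sum_comm]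
  refine sum_congr rfl fun ω _ => ?_
  rw [mul_sum]
  refine sum_congr rfl fun a _ => ?_
  simp [Fin.prod_univ_succ, Fin.consEquiv]
  ring

lemma exW_mono {α : Type*} [Fintype α] {n : ℕ} (w : α → ℝ) (hw : ∀ a, 0 ≤ w a)
    (f g : (Fin n → α) → ℝ) (h : ∀ ω, f ω ≤ g ω) : exW w f ≤ exW w g :=
  sum_le_sum fun ω _ => mul_le_mul_of_nonneg_left (h ω) (prod_nonneg fun _ _ => hw _)

lemma exW_const {α : Type*} [Fintype α] {n : ℕ} (w : α → ℝ) (hs : ∑ a, w a = 1) (c : ℝ) :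
    exW w (fun _ : Fin n → α => c) = c := by
  classical
  unfold exW
  rw [← sum_mul, ← Fintype.piFinset_univ, ← Finset.prod_univ_sum]
  simp [hs]

lemma exW_add {α : Type*} [Fintype α] {n : ℕ} (w : α → ℝ) (f g : (Fin n → α) → ℝ) :
    exW w (fun ω => f ω + g ω) = exW w f + exW w g := by
  simp [exW, mul_add, sum_add_distrib]

lemma exW_smul {α : Type*} [Fintype α] {n : ℕ} (w : α → ℝ) (c : ℝ) (f : (Fin n → α) → ℝ) :
    exW w (fun ω => c * f ω) = c * exW w f := by
  simp only [exW, mul_sum]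
  exact sum_congr rfl fun _ _ => by ring

lemma exW_sum {α κ : Type*} [Fintype α] {n : ℕ} (w : α → ℝ) (s : Finset κ)
    (f : κ → (Fin n → α) → ℝ) :
    exW w (fun ω => ∑ k ∈ s, f k ω) = ∑ k ∈ s, exW w (f k) := by
  simp only [exW, mul_sum]
  exact sum_comm

lemma mcdiarmid {α : Type*} [Fintype α] (w : α → ℝ) (hw : ∀ a, 0 ≤ w a) (hs : ∑ a, w a = 1)
    (c t : ℝ) (n : ℕ) : ∀ (f : (Fin n → α) → ℝ)
    (_ : ∀ ω i a b, f (Function.update ω i a) - f (Function.update ω i b) ≤ c),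
    exW w (fun ω => Real.exp (t * f ω)) ≤
      Real.exp (t * exW w f + n * (c ^ 2 * t ^ 2 / 8)) := by
  induction n with
  | zero => intro f _; simp [exW]
  | succ n ih =>
    intro f hf
    rw [exW_succ, exW_succ w f]
    have h1 : ∀ ω : Fin n → α, ∑ a, w a * Real.exp (t * f (Fin.cons a ω : Fin (n+1) → α)) ≤
        Real.exp (c ^ 2 * t ^ 2 / 8) *
          Real.exp (t * ∑ a, w a * f (Fin.cons a ω : Fin (n+1) → α)) := by
      intro ω
      rw [← Real.exp_add, add_comm (c ^ 2 * t ^ 2 / 8)]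
      refine hoeff_fin w hw hs _ c (fun a b => ?_) t
      have := hf (Fin.cons a ω : Fin (n+1) → α) 0 a b
      simpa using this
    refine (exW_mono w hw _ _ h1).trans ?_
    rw [exW_smul]
    refine (mul_le_mul_of_nonneg_left (ih _ ?_) (Real.exp_pos _).le).trans (le_of_eq ?_)
    · intro ω i a b
      rw [← sum_sub_distrib]
      calc _ ≤ ∑ x, w x * c := by
            refine sum_le_sum fun x _ => ?_
            rw [← mul_sub]
            refine mul_le_mul_of_nonneg_left ?_ (hw x)
            have := hf (Fin.cons x ω : Fin (n+1) → α) i.succ a b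
            simpa [Fin.cons_update] using this
        _ = c := by rw [← sum_mul, hs, one_mul]
    · rw [← Real.exp_add]; congr 1; push_cast; ring

lemma exW_resample {α : Type*} [Fintype α] {n : ℕ} (w : α → ℝ) (hs : ∑ a, w a = 1)
    (i : Fin n) (f : (Fin n → α) → ℝ) :
    exW w f = exW w (fun ω => ∑ a, w a * f (Function.update ω i a)) := by
  unfold exW
  have hupd : ∀ (ω : Fin n → α) a, (∏ j, w (Function.update ω i a j)) * w (ω i)
      = (∏ j, w (ω j)) * w a := by
    intro ω a
    rw [← mul_prod_erase univ _ (mem_univ i), ← mul_prod_erase univ (fun j => w (ω j)) (mem_univ i)]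
    have : ∏ j ∈ univ.erase i, w (Function.update ω i a j) = ∏ j ∈ univ.erase i, w (ω j) :=
      prod_congr rfl fun j hj => by rw [Function.update_of_ne (ne_of_mem_erase hj)]
    rw [this]; simp; ring
  have e : ∑ ω : Fin n → α, (∏ j, w (ω j)) * ∑ a, w a * f (Function.update ω i a)
      = ∑ z : (Fin n → α) × α, ((∏ j, w (z.1 j)) * w z.2) * f (Function.update z.1 i z.2) := by
    rw [Fintype.sum_prod_type]
    exact sum_congr rfl fun ω _ => by rw [mul_sum]; exact sum_congr rfl fun _ _ => by ring
  have e2 : ∑ ω : Fin n → α, (∏ j, w (ω j)) * f ω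
      = ∑ z : (Fin n → α) × α, ((∏ j, w (z.1 j)) * w z.2) * f z.1 := by
    rw [Fintype.sum_prod_type]
    refine sum_congr rfl fun ω _ => ?_
    simp only
    rw [← sum_mul, ← mul_sum, hs, mul_one]
  rw [e, e2]
  refine sum_bij' (fun z _ => (Function.update z.1 i z.2, z.1 i))
    (fun z _ => (Function.update z.1 i z.2, z.1 i)) ?_ ?_ ?_ ?_ ?_
  · simp
  · simp
  · simp
  · simp
  · intro z _
    simp [hupd]

lemma exW_cross {α : Type*} [Fintype α] {n : ℕ} (w : α → ℝ) (hs : ∑ a, w a = 1)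
    (i : Fin n) (g : α → ℝ) (φ : (Fin n → α) → ℝ)
    (h : ∀ ω, ∑ a, w a * (g a * φ (Function.update ω i a)) = 0) :
    exW w (fun ω => g (ω i) * φ ω) = 0 := by
  rw [exW_resample w hs i]
  simp [h, exW]

lemma exW_mean {α : Type*} [Fintype α] {n : ℕ} (w : α → ℝ) (hs : ∑ a, w a = 1)
    (g : α → ℝ) (hg : ∑ a, w a * g a = 0) :
    exW w (fun ω : Fin n → α => ∑ i, g (ω i)) = 0 := by
  rw [exW_sum]
  refine sum_eq_zero fun i _ => ?_
  have := exW_cross w hs i g (fun _ => 1) (by intro ω; simpa using hg)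
  simpa using this

lemma exW_sq {α : Type*} [Fintype α] {n : ℕ} (w : α → ℝ) (hs : ∑ a, w a = 1)
    (g : α → ℝ) (hg : ∑ a, w a * g a = 0) :
    exW w (fun ω : Fin n → α => (∑ i, g (ω i)) ^ 2) = n * ∑ a, w a * g a ^ 2 := by
  have e : (fun ω : Fin n → α => (∑ i, g (ω i)) ^ 2)
      = fun ω => ∑ i, ∑ j, g (ω i) * g (ω j) := by
    funext ω; rw [sq, sum_mul_sum]
  rw [e, exW_sum]
  have : ∀ i : Fin n, exW w (fun ω : Fin n → α => ∑ j, g (ω i) * g (ω j))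
      = ∑ a, w a * g a ^ 2 := by
    intro i
    rw [exW_sum, sum_eq_single i]
    · rw [exW_resample w hs i]
      simp only [Function.update_self]
      rw [exW_const w hs]
      exact sum_congr rfl fun _ _ => by ring
    · intro j _ hj
      refine exW_cross w hs i g (fun ω => g (ω j)) (fun ω => ?_)
      simp only [Function.update_of_ne hj, ← mul_assoc]
      rw [← sum_mul, hg, zero_mul]
    · simp
  simp [this]

lemma exW_abs_le {α : Type*} [Fintype α] {n : ℕ} (w : α → ℝ) (hw : ∀ a, 0 ≤ w a)
    (hs : ∑ a, w a = 1) (f : (Fin n → α) → ℝ) :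
    exW w (fun ω => |f ω|) ≤ Real.sqrt (exW w (fun ω => f ω ^ 2)) := by
  apply Real.le_sqrt_of_sq_le
  set m := exW w (fun ω => |f ω|) with hm
  have h0 : 0 ≤ exW w (fun ω => (f ω ^ 2 + (-(2 * m)) * |f ω|) + m ^ 2) := by
    refine sum_nonneg fun ω _ => mul_nonneg (prod_nonneg fun i _ => hw _) ?_
    simp only
    rw [← sq_abs (f ω)]; nlinarith [sq_nonneg (|f ω| - m)]
  rw [exW_add, exW_add, exW_smul, exW_const w hs, ← hm] at h0
  nlinarith

lemma max_half (a b : ℝ) : max a b = (a + b + |a - b|) / 2 := by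
  rcases le_total a b with h | h
  · rw [max_eq_right h, abs_of_nonpos (by linarith)]; ring
  · rw [max_eq_left h, abs_of_nonneg (by linarith)]; ring

noncomputable def ztW {ι : Type*} [DecidableEq ι] (x : ι) (β : ℝ) (s : ι × Bool) : ℝ :=
  if s = (x, false) then 2 * (1 - β) else if s = (x, true) then -(2 * β) else 0

noncomputable def indW {ι : Type*} [DecidableEq ι] (x : ι) (s : ι × Bool) : ℝ :=
  if s.1 = x then 1 else 0

noncomputable def HW (β M W n : ℝ) : ℝ :=
  max (-W + 2 * β * max (M - n) 0) (W + (1 - 2 * β) * max (M - n) 0)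

noncomputable def GW {ι : Type*} [DecidableEq ι] {N : ℕ} (x : ι) (β q : ℝ)
    (ω : Fin N → ι × Bool) : ℝ :=
  HW β (N * q) (∑ i, ztW x β (ω i)) (∑ i, indW x (ω i))

lemma HW_step1 (β M W n : ℝ) (h0 : 0 ≤ β) (h1 : β ≤ 1 / 2) :
    |HW β M (W + 2 * (1 - β)) (n + 1) - HW β M W n| ≤ 2 := by
  unfold HW
  have a1 : max (M - (n+1)) 0 ≤ max (M - n) 0 := max_le_max (by linarith) le_rfl
  have a2 : max (M - n) 0 ≤ max (M - (n+1)) 0 + 1 := by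
    apply max_le <;> [linarith [le_max_left (M - (n+1)) 0]; linarith [le_max_right (M - (n+1)) 0]]
  refine (abs_max_sub_max_le_max _ _ _ _).trans (max_le ?_ ?_)
  · rw [abs_le]; constructor <;> nlinarith
  · rw [abs_le]; constructor <;> nlinarith

lemma HW_step2 (β M W n : ℝ) (h0 : 0 ≤ β) (h1 : β ≤ 1 / 2) :
    |HW β M (W + -(2 * β)) (n + 1) - HW β M W n| ≤ 2 := by
  unfold HW
  have a1 : max (M - (n+1)) 0 ≤ max (M - n) 0 := max_le_max (by linarith) le_rfl
  have a2 : max (M - n) 0 ≤ max (M - (n+1)) 0 + 1 := by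
    apply max_le <;> [linarith [le_max_left (M - (n+1)) 0]; linarith [le_max_right (M - (n+1)) 0]]
  refine (abs_max_sub_max_le_max _ _ _ _).trans (max_le ?_ ?_)
  · rw [abs_le]; constructor <;> nlinarith
  · rw [abs_le]; constructor <;> nlinarith

lemma sum_upd {α : Type*} {N : ℕ} (g : α → ℝ) (ω : Fin N → α) (i : Fin N) (a : α) :
    ∑ j, g (Function.update ω i a j) = ∑ j ∈ univ.erase i, g (ω j) + g a := by
  rw [← add_sum_erase univ _ (mem_univ i), add_comm]
  congr 1
  · exact sum_congr rfl fun j hj => by rw [Function.update_of_ne (ne_of_mem_erase hj)]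
  · simp

lemma GW_step {ι : Type*} [DecidableEq ι] {N : ℕ} (x : ι) (β q : ℝ)
    (h0 : 0 ≤ β) (h1 : β ≤ 1 / 2) (ω : Fin N → ι × Bool) (i : Fin N) (a : ι × Bool) :
    |GW x β q (Function.update ω i a) - HW β (N * q) (∑ j ∈ univ.erase i, ztW x β (ω j))
      (∑ j ∈ univ.erase i, indW x (ω j))| ≤ 2 * indW x a := by
  unfold GW
  rw [sum_upd, sum_upd]
  obtain ⟨y, s⟩ := a
  by_cases hy : y = x
  · subst hy
    cases s
    · simpa [ztW, indW] using HW_step1 β (N * q) _ _ h0 h1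
    · simpa [ztW, indW] using HW_step2 β (N * q) _ _ h0 h1
  · simp [ztW, indW, hy]

lemma GW_bdd {ι : Type*} [Fintype ι] [DecidableEq ι] {N : ℕ} (β q : ι → ℝ)
    (h0 : ∀ x, 0 ≤ β x) (h1 : ∀ x, β x ≤ 1 / 2) (ω : Fin N → ι × Bool) (i : Fin N)
    (a b : ι × Bool) :
    ∑ x, GW x (β x) (q x) (Function.update ω i a) - ∑ x, GW x (β x) (q x) (Function.update ω i b)
      ≤ 4 := by
  rw [← sum_sub_distrib]
  calc _ ≤ ∑ x, (2 * indW x a + 2 * indW x b) := by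
        refine sum_le_sum fun x _ => ?_
        have A := abs_le.1 (GW_step x (β x) (q x) (h0 x) (h1 x) ω i a)
        have B := abs_le.1 (GW_step x (β x) (q x) (h0 x) (h1 x) ω i b)
        linarith [A.2, B.1]
    _ = 4 := by
        rw [sum_add_distrib, ← mul_sum, ← mul_sum]
        simp [indW]; norm_num

lemma sum_zt {ι : Type*} [Fintype ι] [DecidableEq ι] (x : ι) (β : ℝ) (w φ : ι × Bool → ℝ) :
    ∑ s, w s * (ztW x β s * φ s) =
      w (x, false) * (2 * (1 - β) * φ (x, false)) + w (x, true) * (-(2 * β) * φ (x, true)) := by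
  rw [Fintype.sum_prod_type, sum_eq_single x]
  · simp [ztW]; ring
  · intro y _ hy; simp [ztW, hy]
  · simp

lemma sum_ind {ι : Type*} [Fintype ι] [DecidableEq ι] (x : ι) (w : ι × Bool → ℝ) :
    ∑ s, w s * indW x s = w (x, true) + w (x, false) := by
  rw [Fintype.sum_prod_type, sum_eq_single x]
  · simp [indW]
  · intro y _ hy; simp [indW, hy]
  · simp

lemma GW_mean {ι : Type*} [Fintype ι] [DecidableEq ι] {N : ℕ} (x : ι) (β q : ℝ)
    (w : ι × Bool → ℝ) (hw : ∀ a, 0 ≤ w a) (hs : ∑ a, w a = 1)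
    (h0 : 0 ≤ β) (h1 : β ≤ 1 / 2) (hq : 0 ≤ q) (hf : w (x, false) = β * q)
    (ht : w (x, true) = (1 - β) * q) :
    exW w (fun ω : Fin N → ι × Bool => GW x β q ω) ≤ Real.sqrt 2 * Real.sqrt (N * q) := by
  set W : (Fin N → ι × Bool) → ℝ := fun ω => ∑ i, ztW x β (ω i) with hW
  set Z : (Fin N → ι × Bool) → ℝ := fun ω => ∑ i, (q - indW x (ω i)) with hZ
  set Y : (Fin N → ι × Bool) → ℝ := fun ω => max (Z ω) 0 with hY
  have hG : (fun ω : Fin N → ι × Bool => GW x β q ω)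
      = fun ω => (1/2) * Y ω + |W ω + (1/2 - 2 * β) * Y ω| := by
    funext ω
    have : (N * q - ∑ i, indW x (ω i)) = Z ω := by simp [hZ, sum_sub_distrib]
    unfold GW HW
    rw [this]
    change max (-W ω + 2 * β * Y ω) (W ω + (1 - 2 * β) * Y ω) = _
    rw [max_comm, max_half]
    rw [show W ω + (1 - 2 * β) * Y ω - (-W ω + 2 * β * Y ω)
      = 2 * (W ω + (1/2 - 2 * β) * Y ω) by ring, abs_mul, abs_two]
    ring
  have gm : ∑ a, w a * ztW x β a = 0 := by
    have := sum_zt x β w (fun _ => 1)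
    simp only [mul_one] at this
    rw [this, hf, ht]; ring
  have gz : ∑ a, w a * (q - indW x a) = 0 := by
    simp only [mul_sub, sum_sub_distrib]
    rw [sum_ind, ← sum_mul, hs, hf, ht]; ring
  have hind2 : ∀ s : ι × Bool, indW x s ^ 2 = indW x s := fun s => by
    unfold indW; split_ifs <;> simp
  have vz : ∑ a, w a * (q - indW x a) ^ 2 ≤ q := by
    have : ∀ a, w a * (q - indW x a) ^ 2 = q ^ 2 * w a + (1 - 2 * q) * (w a * indW x a) := by
      intro a
      linear_combination w a * hind2 a
    simp only [this, sum_add_distrib, ← mul_sum]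
    rw [sum_ind, hs, hf, ht]
    nlinarith [sq_nonneg q]
  have vw : ∑ a, w a * ztW x β a ^ 2 = 4 * β * (1 - β) * q := by
    have := sum_zt x β w (ztW x β)
    simp only [← sq] at this
    rw [this, hf, ht]; simp [ztW]; ring
  have EZ : exW w Z = 0 := exW_mean w hs _ gz
  have EZ2 : exW w (fun ω => Z ω ^ 2) ≤ N * q := by
    rw [exW_sq w hs (fun a => q - indW x a) gz]
    exact mul_le_mul_of_nonneg_left vz (Nat.cast_nonneg _)
  have EW2 : exW w (fun ω => W ω ^ 2) = N * (4 * β * (1 - β) * q) := by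
    rw [exW_sq w hs (ztW x β) gm, vw]
  have EWY : exW w (fun ω => W ω * Y ω) = 0 := by
    have : (fun ω => W ω * Y ω) = fun ω => ∑ i, ztW x β (ω i) * Y ω := by
      funext ω; rw [hW, sum_mul]
    rw [this, exW_sum]
    refine sum_eq_zero fun i _ => exW_cross w hs i _ Y fun ω => ?_
    rw [sum_zt x β w (fun a => Y (Function.update ω i a))]
    have : Y (Function.update ω i (x, false)) = Y (Function.update ω i (x, true)) := by
      simp only [hY, hZ]
      rw [sum_upd (fun a => q - indW x a), sum_upd (fun a => q - indW x a)]
      simp [indW]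
    rw [this, hf, ht]; ring
  have EY : exW w Y ≤ (1/2) * Real.sqrt (N * q) := by
    have : Y = fun ω => (1/2) * Z ω + (1/2) * |Z ω| := by
      funext ω
      simp only [hY]
      rw [max_half]; simp; ring
    rw [this, exW_add, exW_smul, exW_smul, EZ]
    have := (exW_abs_le w hw hs Z).trans (Real.sqrt_le_sqrt EZ2)
    linarith
  have EY2 : exW w (fun ω => Y ω ^ 2) ≤ N * q := by
    refine (exW_mono w hw _ _ fun ω => ?_).trans EZ2
    simp only [hY]
    rcases le_total (Z ω) 0 with h | h
    · rw [max_eq_right h]; nlinarith [sq_nonneg (Z ω)]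
    · rw [max_eq_left h]
  have E2 : exW w (fun ω => (W ω + (1/2 - 2 * β) * Y ω) ^ 2) ≤ (5/4) * (N * q) := by
    have : (fun ω => (W ω + (1/2 - 2 * β) * Y ω) ^ 2) = fun ω =>
        (W ω ^ 2 + (2 * (1/2 - 2 * β)) * (W ω * Y ω)) + (1/2 - 2 * β) ^ 2 * Y ω ^ 2 := by
      funext ω; ring
    rw [this, exW_add, exW_add, exW_smul, exW_smul, EWY, EW2]
    have hNq : 0 ≤ N * q := by positivity
    have := mul_le_mul_of_nonneg_left EY2 (sq_nonneg (1/2 - 2 * β))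
    nlinarith
  rw [hG, exW_add, exW_smul]
  have h3 := (exW_abs_le w hw hs _).trans (Real.sqrt_le_sqrt E2)
  rw [Real.sqrt_mul (by norm_num)] at h3
  have h4 : Real.sqrt (5/4) ≤ 1.12 := by
    rw [Real.sqrt_le_left (by norm_num)]; norm_num
  have h5 : 1.4 ≤ Real.sqrt 2 := Real.le_sqrt_of_sq_le (by norm_num)
  have h6 := Real.sqrt_nonneg (N * q)
  nlinarith

lemma HW_det (β M np nm R : ℝ) (h0 : 0 ≤ β) (h1 : β ≤ 1 / 2) (hM : 0 ≤ M)
    (hnp : 0 ≤ np) (hnm : 0 ≤ nm)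
    (hR : (np + nm = 0 ∧ R = 1) ∨ (0 < np + nm ∧ R = max 0 ((np - nm) / (np + nm)))) :
    M * |(1 - 2 * β) - R| ≤ HW β M (2 * (1 - β) * nm - 2 * β * np) (np + nm) := by
  unfold HW
  set Y := max (M - (np + nm)) 0 with hY
  have y0 : 0 ≤ Y := le_max_right _ _
  have y1 : M - (np + nm) ≤ Y := le_max_left _ _
  rcases hR with ⟨hn, rfl⟩ | ⟨hn, hR⟩
  · have : np = 0 := by linarith
    have : nm = 0 := by linarith
    subst np; subst nm
    refine le_max_of_le_left ?_
    rw [show (1 - 2 * β) - 1 = -(2 * β) by ring, abs_neg, abs_of_nonneg (by linarith)]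
    nlinarith
  · set r := (np - nm) / (np + nm) with hr
    have hrn : r * (np + nm) = np - nm := div_mul_cancel₀ _ hn.ne'
    have r1 : r ≤ 1 := by rw [hr, div_le_one hn]; linarith
    have hR0 : 0 ≤ R := hR ▸ le_max_left _ _
    have hRr : r ≤ R := hR ▸ le_max_right _ _
    have hR1 : R ≤ 1 := hR ▸ max_le zero_le_one r1
    rcases le_total (1 - 2 * β) R with h | h
    · rw [abs_of_nonpos (by linarith)]
      rcases le_total 0 r with h' | h'
      · refine le_max_of_le_left ?_
        rw [max_eq_right h'] at hR
        subst hR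
        nlinarith [mul_le_mul_of_nonneg_right y1 (sub_nonneg.2 h), mul_nonneg y0 (sub_nonneg.2 hR1)]
      · rw [max_eq_left h'] at hR
        have hb : β = 1 / 2 := by linarith
        refine le_max_of_le_right ?_
        subst hR; subst hb
        nlinarith [mul_nonneg hn.le (neg_nonneg.2 h')]
    · refine le_max_of_le_right ?_
      rw [abs_of_nonneg (by linarith)]
      nlinarith [mul_le_mul_of_nonneg_right y1 (sub_nonneg.2 h), mul_nonneg y0 hR0,
        mul_nonneg hn.le (sub_nonneg.2 hRr)]

/-- Theorem S3, estimation stage: alternative bound with logarithmic dependence on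
the failure probability. With `v = 1 − e^{−1/2}`, if the number of samples
satisfies `N ≥ 2γ²((1+ε)/ε)²(∑_x √(qₓ) + √((2/v)·log(1/δ₁)))²` (note
`∑_x √(qₓ) = 2^{H_{1/2}(q)/2}`), then with probability at least `1 − δ₁` the
estimated acceptance ratios `R` (built from the counts `N⁺ₓ, N⁻ₓ` of the `N`
i.i.d. samples) satisfy `γ·∑_x |μₓ − Rₓ|·qₓ ≤ ε/(1+ε)`, where `μₓ = pₓ/(γqₓ)` is
the ideal acceptance ratio. -/
theorem acceptance_ratio_estimation_cost_log_delta_bound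
    {ι : Type*} [Fintype ι] [DecidableEq ι] [MeasurableSpace ι]
    (pp pm : ι → ℝ)
    (hpp0 : ∀ x, 0 ≤ pp x) (hpp1 : ∑ x, pp x = 1)
    (hpm0 : ∀ x, 0 ≤ pm x) (hpm1 : ∑ x, pm x = 1)
    (cp cm : ℝ) (hcp : 0 ≤ cp) (hcm : 0 ≤ cm) (hc : cp - cm = 1)
    (γ : ℝ) (hγ : γ = cp + cm)
    (p : ι → ℝ) (hp : ∀ x, p x = cp * pp x - cm * pm x)
    (hp0 : ∀ x, 0 ≤ p x)
    (q : ι → ℝ) (hq : ∀ x, q x = (cp * pp x + cm * pm x) / γ)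
    (μ1 : Measure (ι × Bool)) [IsProbabilityMeasure μ1]
    (hμt : ∀ x, μ1 {(x, true)} = ENNReal.ofReal (cp * pp x / γ))
    (hμf : ∀ x, μ1 {(x, false)} = ENNReal.ofReal (cm * pm x / γ))
    (N : ℕ) (hN : 0 < N)
    (R : ι → (Fin N → ι × Bool) → ℝ)
    (hR : ∀ x ω, R x ω =
      if ((Finset.univ.filter fun i => ω i = (x, true)).card
           + (Finset.univ.filter fun i => ω i = (x, false)).card) = 0
      then 1
      else max 0
        ((((Finset.univ.filter fun i => ω i = (x, true)).card : ℝ)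
            - ((Finset.univ.filter fun i => ω i = (x, false)).card : ℝ))
          / (((Finset.univ.filter fun i => ω i = (x, true)).card : ℝ)
            + ((Finset.univ.filter fun i => ω i = (x, false)).card : ℝ))))
    (μid : ι → ℝ) (hμid : ∀ x, μid x = if q x = 0 then 0 else p x / (γ * q x))
    (v : ℝ) (hv : v = 1 - Real.exp (-1 / 2))
    (ε δ₁ : ℝ) (hε : 0 < ε) (hδ₁0 : 0 < δ₁) (hδ₁1 : δ₁ < 1)
    (hNbound : (N : ℝ) ≥ 2 * γ ^ 2 * ((1 + ε) / ε) ^ 2 *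
      (∑ x, Real.sqrt (q x) + Real.sqrt ((2 / v) * Real.log (1 / δ₁))) ^ 2) :
    ENNReal.ofReal (1 - δ₁) ≤
      (Measure.pi fun _ : Fin N => μ1)
        {ω | γ * ∑ x, |μid x - R x ω| * q x ≤ ε / (1 + ε)} := by
  have hcp1 : 1 ≤ cp := by linarith
  have hγ1 : 1 ≤ γ := by linarith
  have hγ0 : 0 < γ := by linarith
  -- weights
  let w : ι × Bool → ℝ := fun s => if s.2 then cp * pp s.1 / γ else cm * pm s.1 / γ
  have hwt : ∀ x, w (x, true) = cp * pp x / γ := fun x => by simp [w]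
  have hwf : ∀ x, w (x, false) = cm * pm x / γ := fun x => by simp [w]
  have hw : ∀ a, 0 ≤ w a := by
    rintro ⟨x, s⟩
    cases s
    · rw [hwf]; exact div_nonneg (mul_nonneg hcm (hpm0 x)) hγ0.le
    · rw [hwt]; exact div_nonneg (mul_nonneg hcp (hpp0 x)) hγ0.le
  have hwq : ∀ x, q x = w (x, true) + w (x, false) := fun x => by
    rw [hq, hwt, hwf, add_div]
  have hs : ∑ a, w a = 1 := by
    rw [Fintype.sum_prod_type]
    simp only [Fintype.sum_bool, hwt, hwf]
    rw [sum_add_distrib, ← sum_div, ← sum_div, ← mul_sum, ← mul_sum, hpp1, hpm1, ← add_div,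
      hγ]
    have : cp + cm ≠ 0 := by linarith
    field_simp
  have hμw : ∀ a, μ1 {a} = ENNReal.ofReal (w a) := by
    rintro ⟨x, s⟩
    cases s
    · rw [hwf, hμf]
    · rw [hwt, hμt]
  have hq0 : ∀ x, 0 ≤ q x := fun x => by rw [hwq]; exact add_nonneg (hw _) (hw _)
  let β : ι → ℝ := fun x => w (x, false) / q x
  have hβf : ∀ x, w (x, false) = β x * q x := by
    intro x
    rcases eq_or_ne (q x) 0 with h | h
    · rw [h, mul_zero]
      have := hwq x
      linarith [hw (x, true), hw (x, false)]
    · simp only [β]; field_simp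
  have hβt : ∀ x, w (x, true) = (1 - β x) * q x := fun x => by
    have := hwq x
    have := hβf x
    linarith
  have hβ0 : ∀ x, 0 ≤ β x := fun x => div_nonneg (hw _) (hq0 x)
  have hpd : ∀ x, p x = γ * (w (x, true) - w (x, false)) := fun x => by
    rw [hp, hwt, hwf]; field_simp
  have hβ1 : ∀ x, β x ≤ 1 / 2 := by
    intro x
    rcases eq_or_lt_of_le (hq0 x) with h | h
    · simp only [β]; rw [← h]; norm_num
    · simp only [β]
      rw [div_le_iff₀ h]
      have h1 := hp0 x
      rw [hpd] at h1
      have := nonneg_of_mul_nonneg_right h1 hγ0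
      have := hwq x
      linarith
  have hNpos : (0 : ℝ) < N := by exact_mod_cast hN
  -- deterministic bound
  have hdet : ∀ ω : Fin N → ι × Bool,
      N * ∑ x, |μid x - R x ω| * q x ≤ ∑ x, GW x (β x) (q x) ω := by
    intro ω
    rw [mul_sum]
    refine sum_le_sum fun x _ => ?_
    set np : ℝ := ((univ.filter fun i => ω i = (x, true)).card : ℝ) with hnp
    set nm : ℝ := ((univ.filter fun i => ω i = (x, false)).card : ℝ) with hnm
    have e1 : ∑ i, indW x (ω i) = np + nm := by
      rw [hnp, hnm, card_filter, card_filter]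
      push_cast
      rw [← sum_add_distrib]
      refine sum_congr rfl fun i _ => ?_
      rcases ω i with ⟨y, s⟩
      by_cases hy : y = x <;> cases s <;> simp [indW, hy]
    have e2 : ∑ i, ztW x (β x) (ω i) = 2 * (1 - β x) * nm - 2 * β x * np := by
      rw [hnp, hnm, card_filter, card_filter]
      push_cast
      rw [mul_sum, mul_sum, ← sum_sub_distrib]
      refine sum_congr rfl fun i _ => ?_
      rcases ω i with ⟨y, s⟩
      by_cases hy : y = x <;> cases s <;> simp [ztW, hy]
    have hd := HW_det (β x) (N * q x) np nm (R x ω) (hβ0 x) (hβ1 x)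
      (mul_nonneg hNpos.le (hq0 x)) (Nat.cast_nonneg _) (Nat.cast_nonneg _) (by
        rw [hR]
        split_ifs with h
        · left
          refine ⟨?_, rfl⟩
          rw [hnp, hnm]; exact_mod_cast h
        · right
          refine ⟨?_, rfl⟩
          rw [hnp, hnm]; exact_mod_cast Nat.pos_of_ne_zero h)
    unfold GW
    rw [e1, e2]
    refine le_trans (le_of_eq ?_) hd
    rcases eq_or_ne (q x) 0 with h | h
    · simp [h]
    · have : μid x = 1 - 2 * β x := by
        rw [hμid, if_neg h, hpd, hβt, hβf]; field_simp; ring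
      rw [this]; ring
  -- mean
  have hmean : exW w (fun ω : Fin N → ι × Bool => ∑ x, GW x (β x) (q x) ω) ≤
      Real.sqrt 2 * Real.sqrt N * ∑ x, Real.sqrt (q x) := by
    rw [exW_sum, mul_sum]
    refine sum_le_sum fun x _ => ?_
    have := GW_mean (N := N) x (β x) (q x) w hw hs (hβ0 x) (hβ1 x) (hq0 x) (hβf x) (hβt x)
    rwa [Real.sqrt_mul hNpos.le, ← mul_assoc] at this
  have hmgf := fun t => mcdiarmid w hw hs 4 t N (fun ω => ∑ x, GW x (β x) (q x) ω)
    (fun ω i a b => GW_bdd β q hβ0 hβ1 ω i a b)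
  -- numbers
  have hv0 : 0 < v := by
    rw [hv]
    have : Real.exp (-1 / 2) < 1 := by
      rw [Real.exp_lt_one_iff]; norm_num
    linarith
  have hv1 : v ≤ 1 / 2 := by
    rw [hv]
    have := Real.add_one_le_exp (-1 / 2 : ℝ)
    linarith
  set L := Real.log (1 / δ₁) with hL
  have hL0 : 0 < L := Real.log_pos (by rw [lt_div_iff₀ hδ₁0]; linarith)
  have hexpL : Real.exp (-L) = δ₁ := by
    rw [hL, one_div, Real.log_inv, neg_neg, Real.exp_log hδ₁0]
  set S := ∑ x, Real.sqrt (q x) with hS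
  have hS0 : 0 ≤ S := sum_nonneg fun x _ => Real.sqrt_nonneg _
  set T := Real.sqrt ((2 / v) * L) with hT
  have hT0 : 0 ≤ T := Real.sqrt_nonneg _
  have hT2 : T ^ 2 = (2 / v) * L := Real.sq_sqrt (by positivity)
  set K := Real.sqrt 2 * Real.sqrt N with hK
  have hK0 : 0 < K := by positivity
  have hK2 : K ^ 2 = 2 * N := by
    rw [hK, mul_pow, Real.sq_sqrt (by norm_num), Real.sq_sqrt hNpos.le]
  have hthr : K * (S + T) ≤ N * (ε / (1 + ε) / γ) := by
    have h1 : Real.sqrt 2 * γ * ((1 + ε) / ε) * (S + T) ≤ Real.sqrt N := by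
      apply Real.le_sqrt_of_sq_le
      refine le_trans (le_of_eq ?_) hNbound
      rw [mul_pow, mul_pow, mul_pow, Real.sq_sqrt (by norm_num)]
    have h2 : K * (S + T) = (Real.sqrt 2 * γ * ((1 + ε) / ε) * (S + T)) *
        (Real.sqrt N * (ε / (1 + ε) / γ)) := by
      rw [hK]; field_simp
    rw [h2]
    refine (mul_le_mul_of_nonneg_right h1 (by positivity)).trans (le_of_eq ?_)
    rw [← mul_assoc, Real.mul_self_sqrt hNpos.le]
  -- tail bound
  let bad : Finset (Fin N → ι × Bool) := univ.filter
    fun ω => ¬ (γ * ∑ x, |μid x - R x ω| * q x ≤ ε / (1 + ε))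
  have hbad : ∑ ω ∈ bad, ∏ i, w (ω i) ≤ δ₁ := by
    set t := K * T / (4 * N) with ht
    have ht0 : 0 ≤ t := by positivity
    have h1 : ∑ ω ∈ bad, ∏ i, w (ω i) ≤ Real.exp (-(t * (K * (S + T)))) *
        exW w (fun ω : Fin N → ι × Bool => Real.exp (t * ∑ x, GW x (β x) (q x) ω)) := by
      rw [← exW_smul]
      unfold exW
      refine le_trans (sum_le_sum fun ω hω => ?_)
        (sum_le_sum_of_subset_of_nonneg (subset_univ bad) fun ω _ _ =>
          mul_nonneg (prod_nonneg fun i _ => hw _) (by positivity))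
      refine le_mul_of_one_le_right (prod_nonneg fun i _ => hw _) ?_
      simp only
      rw [← Real.exp_add]
      apply Real.one_le_exp
      have hb := (mem_filter.1 hω).2
      rw [not_le] at hb
      have hb2 : ε / (1 + ε) / γ < ∑ x, |μid x - R x ω| * q x := by
        rw [div_lt_iff₀ hγ0]; linarith
      have := mul_lt_mul_of_pos_left hb2 hNpos
      have h5 : K * (S + T) ≤ ∑ x, GW x (β x) (q x) ω := by linarith [hdet ω]
      linarith [mul_le_mul_of_nonneg_left h5 ht0]
    refine h1.trans ((mul_le_mul_of_nonneg_left (hmgf t) (Real.exp_pos _).le).trans ?_)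
    rw [← Real.exp_add, ← hexpL]
    apply Real.exp_le_exp.2
    have h6 := mul_le_mul_of_nonneg_left hmean ht0
    have h7 : t * (K * T) = T ^ 2 / 2 := by
      rw [ht, show K * T / (4 * N) * (K * T) = K ^ 2 * T ^ 2 / (4 * N) by ring, hK2]
      field_simp; ring
    have h8 : N * (4 ^ 2 * t ^ 2 / 8) = T ^ 2 / 4 := by
      rw [ht, div_pow, mul_pow, hK2]
      field_simp; ring
    have h9 : 4 * L ≤ T ^ 2 := by
      rw [hT2]
      refine mul_le_mul_of_nonneg_right ?_ hL0.le
      rw [le_div_iff₀ hv0]; linarith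
    rw [h8]
    rw [mul_add, mul_add, h7]
    linarith
  -- conclusion
  have hcompl : (Measure.pi fun _ : Fin N => μ1)
      {ω | γ * ∑ x, |μid x - R x ω| * q x ≤ ε / (1 + ε)}ᶜ ≤ ENNReal.ofReal δ₁ := by
    have hsub : {ω | γ * ∑ x, |μid x - R x ω| * q x ≤ ε / (1 + ε)}ᶜ
        ⊆ ⋃ ω ∈ bad, ({ω} : Set (Fin N → ι × Bool)) := by
      intro ω hω
      simp only [Set.mem_iUnion]
      exact ⟨ω, mem_filter.2 ⟨mem_univ _, hω⟩, rfl⟩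
    refine (measure_mono hsub).trans ((measure_biUnion_finset_le _ _).trans ?_)
    refine le_trans (le_of_eq ?_) (ENNReal.ofReal_le_ofReal hbad)
    rw [ENNReal.ofReal_sum_of_nonneg fun ω _ => prod_nonneg fun i _ => hw _]
    refine sum_congr rfl fun ω _ => ?_
    rw [← Set.univ_pi_singleton, Measure.pi_pi, ENNReal.ofReal_prod_of_nonneg fun i _ => hw _]
    exact prod_congr rfl fun i _ => hμw _
  have huniv : (1 : ENNReal) ≤ (Measure.pi fun _ : Fin N => μ1)
      {ω | γ * ∑ x, |μid x - R x ω| * q x ≤ ε / (1 + ε)} + ENNReal.ofReal δ₁ := by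
    refine le_trans ?_ (add_le_add le_rfl hcompl)
    refine le_trans ?_ (measure_union_le _ _)
    rw [Set.union_compl_self, measure_univ]
  rw [ENNReal.ofReal_sub _ hδ₁0.le, ENNReal.ofReal_one]
  exact tsub_le_iff_right.2 huniv
end

section
/- Let ι be a finite type, let p and q be probability mass functions on ι with q_x > 0 for all x, let K > 0, and let ε : ι → ℝ. Define R_x = p_x/(K·q_x) − ε_x and assume R_x ≥ 0 for all x and K·∑_x |ε_x|·q_x < 1. Define the distribution produced by rejection sampling with the perturbed acceptance ratios R as p̃_x = R_x·q_x / (∑_y R_y·q_y) (the denominator is positive under the assumptions). Then the total variation distance satisfies (1/2)·∑_x |p_x − p̃_x| ≤ K·∑_x |ε_x|·q_x / (1 − K·∑_x |ε_x|·q_x). Consequently, if K·∑_x |ε_x|·q_x ≤ ε/(1+ε) for some ε > 0, then (1/2)·∑_x |p_x − p̃_x| ≤ ε. -/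
open Finset

/-- Rejection sampling with perturbed acceptance ratios: total variation error bound.
If `R x = p x / (K * q x) - ε x ≥ 0` and `K * ∑ x, |ε x| * q x < 1`, then the
distribution `p̃ x = R x * q x / ∑ y, R y * q y` produced by rejection sampling
satisfies `d_tv(p, p̃) ≤ K·∑|ε|q / (1 − K·∑|ε|q)`; consequently, if
`K·∑|ε|q ≤ ε₀/(1+ε₀)` then `d_tv(p, p̃) ≤ ε₀`. -/
theorem rejection_sampling_perturbed_tv {ι : Type*} [Fintype ι]
    (p q : ι → ℝ) (hp0 : ∀ x, 0 ≤ p x) (hp1 : ∑ x, p x = 1)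
    (hq0 : ∀ x, 0 < q x) (hq1 : ∑ x, q x = 1)
    (K : ℝ) (hK : 0 < K) (e : ι → ℝ)
    (R : ι → ℝ) (hR : ∀ x, R x = p x / (K * q x) - e x)
    (hR0 : ∀ x, 0 ≤ R x)
    (hsmall : K * ∑ x, |e x| * q x < 1)
    (ptilde : ι → ℝ) (hpt : ∀ x, ptilde x = R x * q x / (∑ y, R y * q y)) :
    (1 / 2) * ∑ x, |p x - ptilde x| ≤
        K * (∑ x, |e x| * q x) / (1 - K * ∑ x, |e x| * q x) ∧
    ∀ ε : ℝ, 0 < ε → K * ∑ x, |e x| * q x ≤ ε / (1 + ε) →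
      (1 / 2) * ∑ x, |p x - ptilde x| ≤ ε := by
  set S := K * ∑ x, |e x| * q x with hS
  set s := K * ∑ x, e x * q x with hs
  have hRq : ∀ x, R x * q x = (p x - K * (e x * q x)) / K := by
    intro x
    have := (hq0 x).ne'
    rw [hR]
    field_simp
  have hZ : ∑ y, R y * q y = (1 - s) / K := by
    rw [Finset.sum_congr rfl (fun x _ => hRq x), ← Finset.sum_div, Finset.sum_sub_distrib, hp1,
      ← Finset.mul_sum]
  have hsS : |s| ≤ S := by
    rw [hs, hS, abs_mul, abs_of_pos hK]
    refine mul_le_mul_of_nonneg_left ?_ hK.le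
    refine (Finset.abs_sum_le_sum_abs _ _).trans (le_of_eq ?_)
    refine Finset.sum_congr rfl (fun x _ => ?_)
    rw [abs_mul, abs_of_pos (hq0 x)]
  have hS0 : 0 ≤ S := (abs_nonneg s).trans hsS
  have hD : 1 - S ≤ 1 - s := by linarith [le_abs_self s]
  have hSpos : 0 < 1 - S := by linarith
  have hspos : 0 < 1 - s := by linarith
  have hx : ∀ x, |p x - ptilde x| ≤ (K * (|e x| * q x) + S * p x) / (1 - S) := by
    intro x
    have h1 : p x - ptilde x = (K * (e x * q x) - s * p x) / (1 - s) := by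
      rw [hpt, hZ, hRq]
      field_simp
      ring
    rw [h1, abs_div, abs_of_pos hspos]
    have h2 : |K * (e x * q x) - s * p x| ≤ K * (|e x| * q x) + S * p x := by
      refine (abs_sub _ _).trans ?_
      rw [abs_mul, abs_mul, abs_mul, abs_of_pos hK, abs_of_pos (hq0 x), abs_of_nonneg (hp0 x)]
      have := mul_le_mul_of_nonneg_right hsS (hp0 x)
      linarith
    exact div_le_div₀ ((abs_nonneg _).trans h2) h2 hSpos hD
  have hmain : (1 / 2) * ∑ x, |p x - ptilde x| ≤ S / (1 - S) := by
    have h3 := Finset.sum_le_sum (fun x (_ : x ∈ Finset.univ) => hx x)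
    rw [← Finset.sum_div, Finset.sum_add_distrib, ← Finset.mul_sum, ← Finset.mul_sum, hp1,
      ← hS] at h3
    have h4 : (S + S * 1) / (1 - S) = 2 * (S / (1 - S)) := by ring
    linarith
  refine ⟨hmain, fun ε hε hle => hmain.trans ?_⟩
  rw [div_le_iff₀ hSpos]
  rw [le_div_iff₀ (by linarith)] at hle
  linarith
end

section
/- For every integer N ≥ 1 and every q ∈ (0,1], ∑_{n=1}^{N} (1/n)·C(N,n)·qⁿ·(1−q)^{N−n} ≤ 2/(N·q). (Bound for the expectation of 1/Y restricted to Y ≥ 1, for a binomial random variable Y ~ Bin(N, q).) -/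
open Finset

/-- Bound for the expectation of `1/Y` restricted to `Y ≥ 1`, for `Y ~ Bin(N, q)`:
`∑_{n=1}^{N} (1/n)·C(N,n)·qⁿ·(1−q)^{N−n} ≤ 2/(N·q)`. -/
theorem binomial_inv_expectation_le (N : ℕ) (hN : 1 ≤ N) (q : ℝ)
    (hq0 : 0 < q) (hq1 : q ≤ 1) :
    ∑ n ∈ Finset.Icc 1 N,
        (1 / (n : ℝ)) * (N.choose n : ℝ) * q ^ n * (1 - q) ^ (N - n)
      ≤ 2 / ((N : ℝ) * q) := by
  have hr : 0 ≤ 1 - q := by linarith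
  have hNp : (0 : ℝ) < N := by exact_mod_cast hN
  have hb : ∑ m ∈ Finset.range (N + 1 + 1),
      q ^ m * (1 - q) ^ (N + 1 - m) * ((N + 1).choose m : ℝ) = 1 := by
    rw [← add_pow]; simp
  rw [Finset.sum_range_succ'] at hb
  have h0 : 0 ≤ q ^ 0 * (1 - q) ^ (N + 1 - 0) * ((N + 1).choose 0 : ℝ) := by positivity
  have hsub : ∑ n ∈ Finset.Icc 1 N,
      q ^ (n + 1) * (1 - q) ^ (N + 1 - (n + 1)) * ((N + 1).choose (n + 1) : ℝ) ≤ 1 := by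
    refine le_trans (Finset.sum_le_sum_of_subset_of_nonneg (t := Finset.range (N + 1)) ?_ ?_)
      (by linarith)
    · intro n hn
      simp only [Finset.mem_Icc, Finset.mem_range] at *
      omega
    · intro n _ _
      positivity
  have hterm : ∀ n ∈ Finset.Icc 1 N,
      (1 / (n : ℝ)) * (N.choose n : ℝ) * q ^ n * (1 - q) ^ (N - n) ≤
      2 / ((N : ℝ) * q) *
        (q ^ (n + 1) * (1 - q) ^ (N + 1 - (n + 1)) * ((N + 1).choose (n + 1) : ℝ)) := by
    intro n hn
    have hn1 : 1 ≤ n := (Finset.mem_Icc.mp hn).1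
    have hn' : (1 : ℝ) ≤ n := by exact_mod_cast hn1
    have hc : ((N : ℝ) + 1) * (N.choose n : ℝ) = ((N + 1).choose (n + 1) : ℝ) * (n + 1) := by
      exact_mod_cast Nat.add_one_mul_choose_eq N n
    have hC : (0 : ℝ) ≤ (N.choose n : ℝ) := by positivity
    have hD : (0 : ℝ) ≤ ((N + 1).choose (n + 1) : ℝ) := by positivity
    have key : (1 / (n : ℝ)) * (N.choose n : ℝ) ≤ 2 / (N : ℝ) * ((N + 1).choose (n + 1) : ℝ) := by
      rw [div_mul_eq_mul_div, div_mul_eq_mul_div, div_le_div_iff₀ (by linarith) hNp]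
      nlinarith
    have hp : 0 ≤ q ^ n * (1 - q) ^ (N - n) := by positivity
    have := mul_le_mul_of_nonneg_right key hp
    rw [Nat.add_sub_add_right]
    calc _ = 1 / (n : ℝ) * (N.choose n : ℝ) * (q ^ n * (1 - q) ^ (N - n)) := by ring
      _ ≤ _ := this
      _ = _ := by
        rw [pow_succ]
        field_simp
  refine (Finset.sum_le_sum hterm).trans ?_
  rw [← Finset.mul_sum]
  exact mul_le_of_le_one_right (by positivity) hsub
end

section
/- Let N ≥ 1 be an integer, let α, β ≥ 0 with q := α + β ∈ (0,1]. Consider the two-stage random variable W defined as follows: first draw Y ~ Binomial(N, q); if Y = n ≥ 1, draw n i.i.d. random variables B₁,…,B_n each taking value +1 with probability α/q and −1 with probability β/q, and set W = (1/n)·∑_{i=1}^n B_i − (α−β)/q; if Y = 0, set W = 0. Then E[W²] ≤ 8·α·β / (N·q³). (Second-moment bound for the conditional empirical-mean error averaged over a binomial sample size.) -/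
open Finset

theorem aux_cons (n : ℕ) (F : (Fin (n+1) → Bool) → ℝ) :
    ∑ b, F b = ∑ c : Bool, ∑ b : Fin n → Bool, F (Fin.cons c b) := by
  rw [← (Fin.consEquiv (fun _ => Bool)).sum_comp, Fintype.sum_prod_type]
  rfl

theorem aux_moments (w x : Bool → ℝ) (hw : w true + w false = 1)
    (hx : w true * x true + w false * x false = 0) (n : ℕ) :
    (∑ b : Fin n → Bool, ∏ i, w (b i)) = 1 ∧
    (∑ b : Fin n → Bool, (∏ i, w (b i)) * ∑ i, x (b i)) = 0 ∧
    (∑ b : Fin n → Bool, (∏ i, w (b i)) * (∑ i, x (b i)) ^ 2) =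
      n * (w true * x true ^ 2 + w false * x false ^ 2) := by
  induction n with
  | zero => simp
  | succ n ih =>
    obtain ⟨h0, h1, h2⟩ := ih
    have e1 : ∀ c : Bool, (∑ b : Fin n → Bool, (w c * ∏ i, w (b i)) * (x c + ∑ i, x (b i)))
        = w c * x c := by
      intro c
      have : ∀ b : Fin n → Bool, (w c * ∏ i, w (b i)) * (x c + ∑ i, x (b i)) =
        w c * x c * (∏ i, w (b i)) + w c * ((∏ i, w (b i)) * ∑ i, x (b i)) := fun b => by ring
      simp only [this, Finset.sum_add_distrib, ← Finset.mul_sum, h0, h1]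
      ring
    have e2 : ∀ c : Bool, (∑ b : Fin n → Bool, (w c * ∏ i, w (b i)) * (x c + ∑ i, x (b i)) ^ 2)
        = w c * x c ^ 2 + w c * (n * (w true * x true ^ 2 + w false * x false ^ 2)) := by
      intro c
      have : ∀ b : Fin n → Bool, (w c * ∏ i, w (b i)) * (x c + ∑ i, x (b i)) ^ 2 =
        w c * x c ^ 2 * (∏ i, w (b i)) + 2 * w c * x c * ((∏ i, w (b i)) * ∑ i, x (b i))
         + w c * ((∏ i, w (b i)) * (∑ i, x (b i)) ^ 2) := fun b => by ring
      simp only [this, Finset.sum_add_distrib, ← Finset.mul_sum, h0, h1, h2]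
      ring
    refine ⟨?_, ?_, ?_⟩
    · simp only [aux_cons, Fin.prod_univ_succ, Fin.cons_zero, Fin.cons_succ, ← Finset.mul_sum, h0]
      simpa using hw
    · simp only [aux_cons, Fin.prod_univ_succ, Fin.sum_univ_succ, Fin.cons_zero, Fin.cons_succ, e1]
      simpa using hx
    · simp only [aux_cons, Fin.prod_univ_succ, Fin.sum_univ_succ, Fin.cons_zero, Fin.cons_succ, e2]
      simp only [Fintype.sum_bool]
      push_cast
      linear_combination (n * (w true * x true ^ 2 + w false * x false ^ 2)) * hw

theorem aux_inner (α β q : ℝ) (hq : q = α + β) (hq0 : 0 < q) (n : ℕ) (hn : 1 ≤ n) :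
    (∑ b : Fin n → Bool,
          (∏ i, (if b i then α / q else β / q)) *
            ((∑ i, (if b i then (1 : ℝ) else -1)) / (n : ℝ) - (α - β) / q) ^ 2)
      = 4 * α * β / q ^ 2 / n := by
  have hn0 : (n : ℝ) ≠ 0 := by positivity
  have hne : q ≠ 0 := hq0.ne'
  have h := (aux_moments (fun c => if c then α / q else β / q)
    (fun c => (if c then (1 : ℝ) else -1) - (α - β) / q)
    (by simp; field_simp; linarith) (by simp; field_simp; rw [hq]; ring) n).2.2
  have e : ∀ b : Fin n → Bool, (∏ i, (if b i then α / q else β / q)) *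
            ((∑ i, (if b i then (1 : ℝ) else -1)) / (n : ℝ) - (α - β) / q) ^ 2
      = ((∏ i, (if b i then α / q else β / q)) *
        (∑ i, ((if b i then (1 : ℝ) else -1) - (α - β) / q)) ^ 2) * (1 / (n : ℝ) ^ 2) := by
    intro b
    rw [Finset.sum_sub_distrib, Finset.sum_const, Finset.card_univ, Fintype.card_fin, nsmul_eq_mul]
    generalize (∑ i, (if b i then (1 : ℝ) else -1)) = S
    generalize (∏ i, (if b i then α / q else β / q)) = P
    generalize (α - β) / q = m
    field_simp
  rw [Finset.sum_congr rfl (fun b _ => e b), ← Finset.sum_mul, h]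
  simp only [if_true, Bool.false_eq_true, if_false]
  have hβ : β = q - α := by linarith
  subst hβ
  field_simp
  ring

theorem aux_binom (N : ℕ) (q : ℝ) (hq0 : 0 < q) (hq1 : q ≤ 1) :
    ∑ n ∈ Finset.Icc 1 N, (N.choose n : ℝ) * q ^ n * (1 - q) ^ (N - n) * (1 / ((n : ℝ) + 1))
      ≤ 1 / ((N + 1) * q) := by
  have h1q : 0 ≤ 1 - q := by linarith
  have hb : ∑ m ∈ Finset.range (N + 1 + 1), q ^ m * (1 - q) ^ (N + 1 - m) * ((N + 1).choose m : ℝ)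
      = 1 := by
    rw [← add_pow]; simp
  have hs : ∑ n ∈ Finset.range (N + 1), q ^ (n + 1) * (1 - q) ^ (N - n) *
      ((N + 1).choose (n + 1) : ℝ) ≤ 1 := by
    rw [Finset.sum_range_succ'] at hb
    simp only [Nat.add_sub_add_right] at hb
    have : 0 ≤ q ^ 0 * (1 - q) ^ (N + 1 - 0) * ((N + 1).choose 0 : ℝ) := by positivity
    linarith
  have hle : ∑ n ∈ Finset.Icc 1 N,
        (N.choose n : ℝ) * q ^ n * (1 - q) ^ (N - n) * (1 / ((n : ℝ) + 1))
      ≤ ∑ n ∈ Finset.range (N + 1),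
        (N.choose n : ℝ) * q ^ n * (1 - q) ^ (N - n) * (1 / ((n : ℝ) + 1)) := by
    apply Finset.sum_le_sum_of_subset_of_nonneg
    · intro n hn
      simp at hn ⊢
      omega
    · intros; positivity
  refine hle.trans ?_
  have he : ∀ n : ℕ, (N.choose n : ℝ) * q ^ n * (1 - q) ^ (N - n) * (1 / ((n : ℝ) + 1))
     = (q ^ (n + 1) * (1 - q) ^ (N - n) * ((N + 1).choose (n + 1) : ℝ)) *
        (1 / ((N + 1) * q)) := by
    intro n
    have hc : ((N : ℝ) + 1) * (N.choose n : ℝ) = ((N + 1).choose (n + 1) : ℝ) * (n + 1) := by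
      exact_mod_cast Nat.add_one_mul_choose_eq N n
    have : (n : ℝ) + 1 ≠ 0 := by positivity
    have : (N : ℝ) + 1 ≠ 0 := by positivity
    field_simp
    linear_combination (q * q ^ n * (1 - q) ^ (N - n)) * hc
  rw [Finset.sum_congr rfl (fun n _ => he n), ← Finset.sum_mul]
  have : 0 ≤ 1 / (((N : ℝ) + 1) * q) := by positivity
  nlinarith

/-- Second-moment bound for the conditional empirical-mean error averaged over a
binomial sample size. The two-stage random variable `W` is: draw `Y ~ Bin(N, q)`
with `q = α + β`; given `Y = n ≥ 1` draw `n` i.i.d. ±1 variables (`+1` with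
probability `α/q`, `−1` with probability `β/q`) and set
`W = (mean of the signs) − (α−β)/q`; if `Y = 0` set `W = 0`.
Then `E[W²] ≤ 8αβ/(Nq³)`, the expectation written as an explicit sum. -/
theorem binomial_two_stage_second_moment (N : ℕ) (hN : 1 ≤ N)
    (α β : ℝ) (hα : 0 ≤ α) (hβ : 0 ≤ β)
    (q : ℝ) (hq : q = α + β) (hq0 : 0 < q) (hq1 : q ≤ 1) :
    (1 - q) ^ N * 0 ^ 2 +
      ∑ n ∈ Finset.Icc 1 N, (N.choose n : ℝ) * q ^ n * (1 - q) ^ (N - n) *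
        ∑ b : Fin n → Bool,
          (∏ i, (if b i then α / q else β / q)) *
            ((∑ i, (if b i then (1 : ℝ) else -1)) / (n : ℝ) - (α - β) / q) ^ 2
      ≤ 8 * α * β / ((N : ℝ) * q ^ 3) := by
  have h1q : 0 ≤ 1 - q := by linarith
  have hN' : (1 : ℝ) ≤ N := by exact_mod_cast hN
  have key : ∀ n ∈ Finset.Icc 1 N, (N.choose n : ℝ) * q ^ n * (1 - q) ^ (N - n) *
        (∑ b : Fin n → Bool,
          (∏ i, (if b i then α / q else β / q)) *
            ((∑ i, (if b i then (1 : ℝ) else -1)) / (n : ℝ) - (α - β) / q) ^ 2)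
      ≤ ((N.choose n : ℝ) * q ^ n * (1 - q) ^ (N - n) * (1 / ((n : ℝ) + 1))) *
        (8 * α * β / q ^ 2) := by
    intro n hn
    have hn1 : 1 ≤ n := (Finset.mem_Icc.mp hn).1
    have hn2 : (1 : ℝ) ≤ n := by exact_mod_cast hn1
    rw [aux_inner α β q hq hq0 n hn1, mul_assoc _ (1 / ((n : ℝ) + 1))]
    apply mul_le_mul_of_nonneg_left _ (by positivity)
    have h2 : 1 / (n : ℝ) ≤ 2 * (1 / ((n : ℝ) + 1)) := by
      rw [mul_one_div, div_le_div_iff₀ (by positivity) (by positivity)]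
      linarith
    have h3 : 0 ≤ 4 * α * β / q ^ 2 := by positivity
    calc 4 * α * β / q ^ 2 / n = 4 * α * β / q ^ 2 * (1 / n) := by ring
      _ ≤ 4 * α * β / q ^ 2 * (2 * (1 / ((n : ℝ) + 1))) := mul_le_mul_of_nonneg_left h2 h3
      _ = _ := by ring
  have hsum := Finset.sum_le_sum key
  rw [← Finset.sum_mul] at hsum
  have h4 : 0 ≤ 8 * α * β / q ^ 2 := by positivity
  have h5 := mul_le_mul_of_nonneg_right (aux_binom N q hq0 hq1) h4
  have h6 : 1 / (((N : ℝ) + 1) * q) ≤ 1 / (N * q) := by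
    apply one_div_le_one_div_of_le (by positivity)
    nlinarith
  have h7 := mul_le_mul_of_nonneg_right h6 h4
  have h8 : 1 / ((N : ℝ) * q) * (8 * α * β / q ^ 2) = 8 * α * β / ((N : ℝ) * q ^ 3) := by
    field_simp
  have h9 : (1 - q) ^ N * (0 : ℝ) ^ 2 = 0 := by simp
  rw [h9, zero_add]
  exact hsum.trans (h5.trans (h7.trans h8.le))
end

section
/- For every q ∈ [0,1] and every y ∈ [0,1], 1 − q + q·e^{−y/2} ≤ exp( −q·(1 − e^{−1/2})·y ). -/
/-- For every `q ∈ [0,1]` and `y ∈ [0,1]`,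
`1 − q + q·e^{−y/2} ≤ exp(−q·(1 − e^{−1/2})·y)`. -/
theorem one_sub_q_add_q_exp_le (q y : ℝ) (hq0 : 0 ≤ q) (hq1 : q ≤ 1)
    (hy0 : 0 ≤ y) (hy1 : y ≤ 1) :
    1 - q + q * Real.exp (-y / 2) ≤
      Real.exp (-q * (1 - Real.exp (-1 / 2)) * y) := by
  have h := convexOn_exp.2 (Set.mem_univ (0 : ℝ)) (Set.mem_univ (-1 / 2 : ℝ))
    (sub_nonneg.2 hy1) hy0 (by ring)
  simp only [smul_eq_mul, mul_zero, zero_add, Real.exp_zero, mul_one] at h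
  have e : y * (-1 / 2) = -y / 2 := by ring
  rw [e] at h
  have h2 := Real.add_one_le_exp (-q * (1 - Real.exp (-1 / 2)) * y)
  have h3 := mul_le_mul_of_nonneg_left h hq0
  linarith
end

section
/- Let N ≥ 1 be an integer, q ∈ (0,1], μ ∈ [0,1], γ > 0, and v = 1 − e^{−1/2}. Consider the two-stage random variable E defined as follows: first draw Y ~ Binomial(N, q); if Y = n ≥ 1, draw n i.i.d. random variables B₁,…,B_n each taking value +1 with probability (1+μ)/2 and −1 with probability (1−μ)/2, set Z = (1/n)·∑_{i=1}^n B_i and R = max(Z, 0); if Y = 0, set R = 1; finally set E = γ·q·|μ − R|. Then for every t > 0, P(E > t) ≤ 2·exp( −v·N·t² / (γ²·q) ). (Subgaussian tail bound for the weighted acceptance-ratio estimation error of a single outcome, used in the proof of Theorem S3.) -/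
open Finset

open MeasureTheory ProbabilityTheory in
lemma two_point_mgf (μ l : ℝ) (h0 : 0 ≤ μ) (h1 : μ ≤ 1) :
    (1 + μ) / 2 * Real.exp (l * (1 - μ)) + (1 - μ) / 2 * Real.exp (l * (-1 - μ))
      ≤ Real.exp (l ^ 2 / 2) := by
  let P : Measure ℝ := ENNReal.ofReal ((1 + μ) / 2) • Measure.dirac 1 +
    ENNReal.ofReal ((1 - μ) / 2) • Measure.dirac (-1)
  have hP : IsProbabilityMeasure P := ⟨by
    simp only [P, Measure.add_apply, Measure.smul_apply, measure_univ, smul_eq_mul, mul_one]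
    rw [← ENNReal.ofReal_add (by linarith) (by linarith), ← ENNReal.ofReal_one]
    congr 1; ring⟩
  have key : ∀ f : ℝ → ℝ, ∫ x, f x ∂P = (1 + μ) / 2 * f 1 + (1 - μ) / 2 * f (-1) := by
    intro f
    have hi : ∀ a c : ℝ, Integrable f (ENNReal.ofReal c • Measure.dirac a) := fun a c =>
      (integrable_dirac (by simp)).smul_measure ENNReal.ofReal_ne_top
    rw [integral_add_measure (hi _ _) (hi _ _), integral_smul_measure, integral_smul_measure,
      integral_dirac, integral_dirac, ENNReal.toReal_ofReal (by linarith),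
      ENNReal.toReal_ofReal (by linarith)]
    simp
  have hS := hasSubgaussianMGF_of_mem_Icc (μ := P) (X := fun x => x) (a := -1) (b := 1)
    measurable_id.aemeasurable (by
      simp only [P]
      rw [ae_add_measure_iff]
      constructor
      · exact Measure.ae_smul_measure (by simp [ae_dirac_eq]) _
      · exact Measure.ae_smul_measure (by simp [ae_dirac_eq]) _)
  have h := hS.mgf_le l
  rw [mgf, key] at h
  simp only [key] at h
  have e : (1 + μ) / 2 * 1 + (1 - μ) / 2 * (-1) = μ := by ring
  rw [e] at h
  refine h.trans (le_of_eq ?_)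
  congr 1
  norm_num

lemma sum_pi_pow (n : ℕ) (f : Bool → ℝ) :
    ∑ b : Fin n → Bool, ∏ i, f (b i) = (f true + f false) ^ n := by
  have := Finset.sum_prod_piFinset (ι := Fin n) (Finset.univ : Finset Bool) (fun _ x => f x)
  rw [Fintype.piFinset_univ] at this
  rw [this]
  simp

lemma tail_n (μ s : ℝ) (h0 : 0 ≤ μ) (h1 : μ ≤ 1) (hs : 0 < s) (n : ℕ) (hn : 1 ≤ n) :
    ∑ b : Fin n → Bool,
          (∏ i, (if b i then (1 + μ) / 2 else (1 - μ) / 2)) *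
            (if s < |μ - max ((∑ i, (if b i then (1 : ℝ) else -1)) / (n : ℝ)) 0|
             then 1 else 0) ≤ 2 * Real.exp (-s ^ 2 / 2) ^ n := by
  have hn' : (0 : ℝ) < n := by exact_mod_cast hn
  have step : ∀ l : ℝ, l ^ 2 = s ^ 2 →
      ∑ b : Fin n → Bool, (∏ i, (if b i then (1 + μ) / 2 else (1 - μ) / 2)) *
        ∏ i, Real.exp (l * ((if b i then (1 : ℝ) else -1) - μ) - s ^ 2)
        ≤ Real.exp (-s ^ 2 / 2) ^ n := by
    intro l hl
    simp only [← Finset.prod_mul_distrib]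
    rw [sum_pi_pow n (fun c => (if c then (1 + μ) / 2 else (1 - μ) / 2) *
      Real.exp (l * ((if c then (1 : ℝ) else -1) - μ) - s ^ 2))]
    simp only [if_true, Bool.false_eq_true, if_false]
    have m := two_point_mgf μ l h0 h1
    have a1 : (0 : ℝ) ≤ (1 + μ) / 2 := by linarith
    have a2 : (0 : ℝ) ≤ (1 - μ) / 2 := by linarith
    apply pow_le_pow_left₀ (by positivity)
    rw [sub_eq_add_neg (l * (1 - μ)), sub_eq_add_neg (l * (-1 - μ)), Real.exp_add, Real.exp_add]
    have e : Real.exp (-s ^ 2 / 2) = Real.exp (l ^ 2 / 2) * Real.exp (-s ^ 2) := by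
      rw [← Real.exp_add, hl]; congr 1; ring
    rw [e]
    nlinarith [mul_le_mul_of_nonneg_right m (Real.exp_pos (-s ^ 2)).le]
  have A := step s rfl
  have B := step (-s) (by ring)
  rw [two_mul]
  refine le_trans ?_ (add_le_add A B)
  rw [← Finset.sum_add_distrib]
  apply Finset.sum_le_sum
  intro b _
  rw [← mul_add]
  apply mul_le_mul_of_nonneg_left
  swap
  · apply Finset.prod_nonneg
    intro i _
    split_ifs <;> linarith
  rw [← Real.exp_sum, ← Real.exp_sum]
  simp only [Finset.sum_sub_distrib, ← Finset.mul_sum, Finset.sum_const, Finset.card_univ,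
    Fintype.card_fin, nsmul_eq_mul]
  set S : ℝ := ∑ i, (if b i then (1 : ℝ) else -1)
  split_ifs with h
  · obtain ⟨Z, hZ⟩ : ∃ Z, Z = S / n := ⟨_, rfl⟩
    have hS : S = n * Z := by rw [hZ]; field_simp
    rw [← hZ] at h
    have h' : s < Z - μ ∨ s < μ - Z := by
      rcases lt_abs.1 h with h | h
      · right; linarith [le_max_left Z 0]
      · left
        rcases max_cases Z 0 with h2 | h2 <;> linarith
    rw [hS]
    rcases h' with h' | h'
    · have : 1 ≤ Real.exp (s * (n * Z - n * μ) - n * s ^ 2) := by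
        apply Real.one_le_exp
        have : 0 ≤ n * (s * (Z - μ - s)) := by
          have : 0 ≤ Z - μ - s := by linarith
          positivity
        nlinarith
      linarith [Real.exp_pos (-s * (n * Z - n * μ) - n * s ^ 2)]
    · have : 1 ≤ Real.exp (-s * (n * Z - n * μ) - n * s ^ 2) := by
        apply Real.one_le_exp
        have : 0 ≤ n * (s * (μ - Z - s)) := by
          have : 0 ≤ μ - Z - s := by linarith
          positivity
        nlinarith
      linarith [Real.exp_pos (s * (n * Z - n * μ) - n * s ^ 2)]
  · positivity

/-- Subgaussian tail bound for the weighted acceptance-ratio estimation error of a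
single outcome (used in the proof of Theorem S3). The two-stage random variable `E`
is: draw `Y ~ Bin(N, q)`; given `Y = n ≥ 1` draw `n` i.i.d. ±1 variables (`+1` with
probability `(1+μ)/2`, `−1` with probability `(1−μ)/2`), set `Z` to their mean and
`R = max(Z, 0)`; if `Y = 0` set `R = 1`; finally `E = γ·q·|μ − R|`. Then for `t > 0`,
`P(E > t) ≤ 2·exp(−v·N·t²/(γ²·q))` with `v = 1 − e^{−1/2}`, the probability written
as an explicit sum. -/
theorem acceptance_ratio_error_tail (N : ℕ) (hN : 1 ≤ N)
    (q : ℝ) (hq0 : 0 < q) (hq1 : q ≤ 1)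
    (μ : ℝ) (hμ0 : 0 ≤ μ) (hμ1 : μ ≤ 1)
    (γ : ℝ) (hγ : 0 < γ)
    (v : ℝ) (hv : v = 1 - Real.exp (-1 / 2))
    (t : ℝ) (ht : 0 < t) :
    (if γ * q * |μ - 1| > t then (1 - q) ^ N else 0) +
      ∑ n ∈ Finset.Icc 1 N, (N.choose n : ℝ) * q ^ n * (1 - q) ^ (N - n) *
        ∑ b : Fin n → Bool,
          (∏ i, (if b i then (1 + μ) / 2 else (1 - μ) / 2)) *
            (if γ * q * |μ - max ((∑ i, (if b i then (1 : ℝ) else -1)) / (n : ℝ)) 0| > t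
             then 1 else 0)
      ≤ 2 * Real.exp (-(v * N * t ^ 2) / (γ ^ 2 * q)) := by
  have hgq : 0 < γ * q := by positivity
  obtain ⟨s, hsd⟩ : ∃ s, s = t / (γ * q) := ⟨_, rfl⟩
  have hs : 0 < s := by rw [hsd]; positivity
  have hts : t = γ * q * s := by rw [hsd]; field_simp
  have hiff : ∀ x : ℝ, (γ * q * x > t) = (s < x) := by
    intro x
    rw [hts, gt_iff_lt, mul_lt_mul_iff_right₀ hgq]
  simp only [hiff]
  have hq' : 0 ≤ 1 - q := by linarith
  rcases le_or_gt 1 s with h1 | h1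
  · have z1 : ¬ (s < |μ - 1|) := by
      rw [not_lt, abs_le]; constructor <;> linarith
    rw [if_neg z1]
    have z2 : ∀ n ∈ Finset.Icc 1 N, (N.choose n : ℝ) * q ^ n * (1 - q) ^ (N - n) *
        ∑ b : Fin n → Bool,
          (∏ i, (if b i then (1 + μ) / 2 else (1 - μ) / 2)) *
            (if s < |μ - max ((∑ i, (if b i then (1 : ℝ) else -1)) / (n : ℝ)) 0|
             then 1 else 0) = 0 := by
      intro n hn
      have hn' : (0 : ℝ) < n := by exact_mod_cast (Finset.mem_Icc.1 hn).1
      rw [Finset.sum_eq_zero, mul_zero]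
      intro b _
      rw [if_neg, mul_zero]
      have : (∑ i, (if b i then (1 : ℝ) else -1)) / (n : ℝ) ≤ 1 := by
        rw [div_le_one hn']
        calc (∑ i, (if b i then (1 : ℝ) else -1)) ≤ ∑ i : Fin n, (1 : ℝ) := by
              apply Finset.sum_le_sum
              intro i _
              split_ifs <;> norm_num
          _ = n := by simp
      have h2 := max_le this (zero_le_one)
      have h3 := le_max_right ((∑ i, (if b i then (1 : ℝ) else -1)) / (n : ℝ)) 0
      rw [not_lt, abs_le]; constructor <;> linarith
    rw [Finset.sum_eq_zero z2, add_zero]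
    positivity
  · obtain ⟨x, hx⟩ : ∃ x, x = Real.exp (-s ^ 2 / 2) := ⟨_, rfl⟩
    have hx0 : 0 < x := by rw [hx]; positivity
    have hxv : x ≤ 1 - v * s ^ 2 := by
      have c := convexOn_exp.2 (Set.mem_univ (-1 / 2 : ℝ)) (Set.mem_univ (0 : ℝ))
        (show (0 : ℝ) ≤ s ^ 2 by positivity) (show (0 : ℝ) ≤ 1 - s ^ 2 by nlinarith) (by ring)
      simp only [smul_eq_mul, mul_zero, add_zero, Real.exp_zero, mul_one] at c
      rw [hx, hv, show -s ^ 2 / 2 = s ^ 2 * (-1 / 2) by ring]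
      linarith
    calc _ ≤ 2 * (1 - q) ^ N + ∑ n ∈ Finset.Icc 1 N,
            (N.choose n : ℝ) * q ^ n * (1 - q) ^ (N - n) * (2 * x ^ n) := by
          apply add_le_add
          · have : 0 ≤ (1 - q) ^ N := by positivity
            split_ifs <;> linarith
          · apply Finset.sum_le_sum
            intro n hn
            apply mul_le_mul_of_nonneg_left _ (by positivity)
            rw [hx]
            exact tail_n μ s hμ0 hμ1 hs n (Finset.mem_Icc.1 hn).1
      _ = 2 * (q * x + (1 - q)) ^ N := by
          rw [add_pow, Finset.range_eq_Ico, Finset.sum_eq_sum_Ico_succ_bot (by omega), mul_add,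
            Finset.mul_sum]
          congr 1
          · simp
          · apply Finset.sum_congr
            · ext a; simp only [Finset.mem_Icc, Finset.mem_Ico]; omega
            · intro n _
              rw [mul_pow]; ring
      _ ≤ 2 * Real.exp (-(q * (v * s ^ 2))) ^ N := by
          gcongr
          have := Real.add_one_le_exp (-(q * (v * s ^ 2)))
          nlinarith
      _ = _ := by
          rw [← Real.exp_nat_mul, hts]
          congr 2
          field_simp
end

section
/- The expected total variation distance between the target quasi-probability mixture p and the signed empirical estimator p̃ built from N i.i.d. samples satisfies E[ (1/2)·∑_x |p_x − p̃_x| ] ≤ (γ/(2·√N)) · ∑_x √(q_x). (Expected-error bound used in the proof of Proposition 1.) -/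
open MeasureTheory Finset

lemma aux_null {α : Type*} [Fintype α] [MeasurableSpace α] (μ : Measure α)
    [IsProbabilityMeasure μ] (h : ∑ a, μ {a} = 1) (s : Set α) : NullMeasurableSet s μ := by
  classical
  have hle : ∀ t : Set α, μ t ≤ ∑ a, if a ∈ t then μ {a} else 0 := by
    intro t
    rw [← Finset.sum_filter]
    calc μ t ≤ μ (⋃ a ∈ (Finset.univ.filter (fun a => a ∈ t)), {a}) := by
          apply measure_mono
          intro a ha
          simp [ha]
      _ ≤ _ := measure_biUnion_finset_le _ _
  have hsum : μ s + μ sᶜ ≤ 1 := by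
    refine (add_le_add (hle s) (hle sᶜ)).trans ?_
    rw [← Finset.sum_add_distrib, ← h]
    apply Finset.sum_le_sum
    intro a _
    by_cases ha : a ∈ s <;> simp [ha]
  set T := toMeasurable μ s with hT
  set T' := toMeasurable μ sᶜ with hT'
  have hTm : MeasurableSet T := measurableSet_toMeasurable _ _
  have hTm' : MeasurableSet T' := measurableSet_toMeasurable _ _
  have hU : T ∪ T' = Set.univ := by
    apply Set.eq_univ_of_univ_subset
    rw [← Set.union_compl_self s]
    exact Set.union_subset_union (subset_toMeasurable _ _) (subset_toMeasurable _ _)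
  have h1 : μ (T ∪ T') + μ (T ∩ T') = μ T + μ T' := measure_union_add_inter T hTm'
  rw [hU, measure_univ, hT, hT', measure_toMeasurable, measure_toMeasurable, ← hT, ← hT'] at h1
  have h2 : μ (T ∩ T') = 0 := by
    rw [← h1] at hsum
    have : 1 + μ (T ∩ T') ≤ 1 + 0 := by simpa using hsum
    exact le_antisymm ((ENNReal.add_le_add_iff_left ENNReal.one_ne_top).1 this) bot_le
  have h3 : μ (T \ s) = 0 := by
    refine measure_mono_null (t := T ∩ T') ?_ h2
    intro a ha
    exact ⟨ha.1, subset_toMeasurable μ sᶜ ha.2⟩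
  have h4 : s = T \ (T \ s) := by
    rw [Set.sdiff_sdiff_right_self]
    exact (Set.inter_eq_right.2 (subset_toMeasurable μ s)).symm
  rw [h4]
  exact hTm.nullMeasurableSet.diff (NullMeasurableSet.of_null h3)

lemma aux_decomp {α : Type*} [Fintype α] (f : α → ℝ) :
    f = fun b => ∑ a, Set.indicator {a} (fun _ => f a) b := by
  classical
  ext b
  simp [Set.indicator_apply]

lemma aux_aesm {α : Type*} [Fintype α] [MeasurableSpace α] (μ : Measure α)
    [IsProbabilityMeasure μ] (h : ∑ a, μ {a} = 1) (f : α → ℝ) : AEStronglyMeasurable f μ := by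
  rw [aux_decomp f]
  refine Finset.aestronglyMeasurable_fun_sum _ fun a _ => ?_
  exact aestronglyMeasurable_const.indicator₀ (aux_null μ h _)

lemma aux_int {α : Type*} [Fintype α] [MeasurableSpace α] (μ : Measure α)
    [IsProbabilityMeasure μ] (h : ∑ a, μ {a} = 1) (f : α → ℝ) :
    ∫ a, f a ∂μ = ∑ a, μ.real {a} * f a := by
  conv_lhs => rw [aux_decomp f]
  rw [integral_finsetSum]
  · refine Finset.sum_congr rfl fun a _ => ?_
    rw [integral_indicator₀ (aux_null μ h _)]
    simp [measureReal_def]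
  · intro a _
    exact (integrable_const _).indicator₀ (aux_null μ h _)

lemma aux_memLp {α : Type*} [Fintype α] [MeasurableSpace α] (μ : Measure α)
    [IsProbabilityMeasure μ] (h : ∑ a, μ {a} = 1) (f : α → ℝ) : MemLp f 2 μ := by
  refine MemLp.of_bound (aux_aesm μ h f) (∑ a, ‖f a‖) (Filter.Eventually.of_forall fun a => ?_)
  exact Finset.single_le_sum (f := fun a => ‖f a‖) (fun _ _ => norm_nonneg _) (Finset.mem_univ a)

/-- One-coordinate bound. -/
lemma aux_dev {α : Type*} [Fintype α] [MeasurableSpace α] (μ : Measure α)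
    [IsProbabilityMeasure μ] (h : ∑ a, μ {a} = 1) (f : α → ℝ) (γ : ℝ) (hγ : 0 ≤ γ)
    (N : ℕ) (hN : 0 < N) :
    Integrable (fun ω : Fin N → α => |γ * ∫ a, f a ∂μ - (γ / N) * ∑ i, f (ω i)|)
      (Measure.pi fun _ : Fin N => μ) ∧
    ∫ ω, |γ * ∫ a, f a ∂μ - (γ / N) * ∑ i, f (ω i)| ∂(Measure.pi fun _ : Fin N => μ)
      ≤ γ / Real.sqrt N * Real.sqrt (∫ a, f a ^ 2 ∂μ) := by
  set P := Measure.pi fun _ : Fin N => μ with hP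
  have hN' : (0 : ℝ) < N := by exact_mod_cast hN
  have hf := aux_memLp μ h f
  have hfi : ∀ i : Fin N, MemLp (fun ω : Fin N → α => f (ω i)) 2 P := fun i =>
    hf.comp_measurePreserving (measurePreserving_eval (fun _ : Fin N => μ) i)
  have hS : MemLp (fun ω : Fin N → α => ∑ i, f (ω i)) 2 P :=
    memLp_finsetSum _ fun i _ => hfi i
  have hES : ∫ ω, ∑ i, f (ω i) ∂P = N * ∫ a, f a ∂μ := by
    rw [integral_finsetSum _ fun i _ => (hfi i).integrable (by norm_num)]
    simp_rw [hP]
    rw [Finset.sum_congr rfl fun i _ => integral_comp_eval (μ := fun _ : Fin N => μ) (i := i)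
      (aux_aesm μ h f)]
    simp
  have hvar : ProbabilityTheory.variance (fun ω : Fin N → α => ∑ i, f (ω i)) P
      = N * ProbabilityTheory.variance f μ := by
    have := ProbabilityTheory.variance_sum_pi (μ := fun _ : Fin N => μ) (X := fun _ => f)
      (fun _ => hf)
    rw [← hP] at this
    have e : (fun ω : Fin N → α => ∑ i, f (ω i)) = ∑ i, fun ω : Fin N → α => f (ω i) := by
      ext ω; simp
    rw [e, this]
    simp
  have hZ : MemLp (fun ω : Fin N → α => |γ * ∫ a, f a ∂μ - (γ / N) * ∑ i, f (ω i)|) 2 P :=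
    ((memLp_const _).sub (hS.const_mul _)).norm
  refine ⟨hZ.integrable (by norm_num), ?_⟩
  have h0 := ProbabilityTheory.variance_nonneg
    (fun ω : Fin N → α => |γ * ∫ a, f a ∂μ - (γ / N) * ∑ i, f (ω i)|) P
  rw [ProbabilityTheory.variance_eq_sub hZ] at h0
  have h1 : ∫ ω, ((fun ω : Fin N → α => |γ * ∫ a, f a ∂μ - (γ / N) * ∑ i, f (ω i)|) ^ 2) ω ∂P
      = (γ / N) ^ 2 * (N * ProbabilityTheory.variance f μ) := by
    rw [← hvar, ProbabilityTheory.variance_eq_integral hS.aemeasurable, hES,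
      ← integral_const_mul ((γ / N) ^ 2)]
    refine integral_congr_ae (Filter.Eventually.of_forall fun ω => ?_)
    simp only [Pi.pow_apply, sq_abs]
    field_simp
    ring
  have h2 : ProbabilityTheory.variance f μ ≤ ∫ a, f a ^ 2 ∂μ :=
    ProbabilityTheory.variance_le_expectation_sq (aux_aesm μ h f)
  rw [h1] at h0
  have h3 : 0 ≤ ∫ a, f a ^ 2 ∂μ := integral_nonneg fun a => sq_nonneg _
  refine abs_le_of_sq_le_sq' ?_ (by positivity) |>.2
  have h4 : (γ / Real.sqrt N * Real.sqrt (∫ a, f a ^ 2 ∂μ)) ^ 2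
      = (γ / N) ^ 2 * (N * ∫ a, f a ^ 2 ∂μ) := by
    rw [mul_pow, div_pow, Real.sq_sqrt hN'.le, Real.sq_sqrt h3]
    field_simp
  rw [h4]
  have h5 : (γ / N) ^ 2 * (N * ProbabilityTheory.variance f μ)
      ≤ (γ / N) ^ 2 * (N * ∫ a, f a ^ 2 ∂μ) := by gcongr
  linarith

/-- Expected-error bound used in the proof of Proposition 1: the expected total
variation distance between the target quasi-probability mixture `p` and the signed
empirical estimator `p̃` built from `N` i.i.d. samples satisfies
`E[(1/2)·∑_x |p_x − p̃_x|] ≤ (γ/(2√N))·∑_x √(q_x)`. -/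
theorem expected_tv_distance_bound
    {ι : Type*} [Fintype ι] [DecidableEq ι] [MeasurableSpace ι]
    (pp pm : ι → ℝ)
    (hpp0 : ∀ x, 0 ≤ pp x) (hpp1 : ∑ x, pp x = 1)
    (hpm0 : ∀ x, 0 ≤ pm x) (hpm1 : ∑ x, pm x = 1)
    (cp cm : ℝ) (hcp : 0 ≤ cp) (hcm : 0 ≤ cm) (hc : cp - cm = 1)
    (γ : ℝ) (hγ : γ = cp + cm)
    (p : ι → ℝ) (hp : ∀ x, p x = cp * pp x - cm * pm x)
    (hp0 : ∀ x, 0 ≤ p x)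
    (q : ι → ℝ) (hq : ∀ x, q x = (cp * pp x + cm * pm x) / γ)
    (μ1 : Measure (ι × Bool)) [IsProbabilityMeasure μ1]
    (hμt : ∀ x, μ1 {(x, true)} = ENNReal.ofReal (cp * pp x / γ))
    (hμf : ∀ x, μ1 {(x, false)} = ENNReal.ofReal (cm * pm x / γ))
    (N : ℕ) (hN : 0 < N) :
    ∫ ω, ((1 / 2) * ∑ x, |p x - (γ / N) *
          ∑ i, (if (ω i).1 = x then (if (ω i).2 then (1 : ℝ) else -1) else 0)|)
        ∂(Measure.pi fun _ : Fin N => μ1)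
      ≤ γ / (2 * Real.sqrt N) * ∑ x, Real.sqrt (q x) := by
  have hγ0 : 0 < γ := by linarith
  have hA : ∀ x, 0 ≤ cp * pp x / γ := fun x => div_nonneg (mul_nonneg hcp (hpp0 x)) hγ0.le
  have hB : ∀ x, 0 ≤ cm * pm x / γ := fun x => div_nonneg (mul_nonneg hcm (hpm0 x)) hγ0.le
  have hsum : ∑ a, μ1 {a} = 1 := by
    rw [Fintype.sum_prod_type]
    simp only [Fintype.sum_bool, hμt, hμf]
    simp_rw [← ENNReal.ofReal_add (hA _) (hB _)]
    rw [← ENNReal.ofReal_sum_of_nonneg fun x _ => add_nonneg (hA x) (hB x),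
      Finset.sum_add_distrib, ← Finset.sum_div, ← Finset.sum_div, ← Finset.mul_sum,
      ← Finset.mul_sum, hpp1, hpm1, ← add_div, mul_one, mul_one, ← hγ, div_self hγ0.ne']
    simp
  have hrt : ∀ x, μ1.real {(x, true)} = cp * pp x / γ := fun x => by
    rw [measureReal_def, hμt, ENNReal.toReal_ofReal (hA x)]
  have hrf : ∀ x, μ1.real {(x, false)} = cm * pm x / γ := fun x => by
    rw [measureReal_def, hμf, ENNReal.toReal_ofReal (hB x)]
  let f : ι → ι × Bool → ℝ := fun x a => if a.1 = x then (if a.2 then (1 : ℝ) else -1) else 0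
  have hf1 : ∀ x, γ * ∫ a, f x a ∂μ1 = p x := by
    intro x
    rw [aux_int μ1 hsum, Fintype.sum_prod_type]
    simp only [Fintype.sum_bool, hrt, hrf, f]
    simp [Finset.sum_add_distrib, hp]
    field_simp
    ring
  have hf2 : ∀ x, ∫ a, f x a ^ 2 ∂μ1 = q x := by
    intro x
    rw [aux_int μ1 hsum, Fintype.sum_prod_type]
    simp only [Fintype.sum_bool, hrt, hrf, f]
    simp [Finset.sum_add_distrib, hq, ite_pow]
    field_simp
  have key := fun x => aux_dev μ1 hsum (f x) γ hγ0.le N hN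
  simp only [hf1, hf2] at key
  rw [integral_const_mul, integral_finsetSum _ fun x _ => (key x).1]
  calc _ ≤ (1 / 2) * ∑ x, γ / Real.sqrt N * Real.sqrt (q x) := by
        gcongr with x
        exact (key x).2
    _ = _ := by
        rw [← Finset.mul_sum]
        ring
end
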